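/- arXiv:1207.1961 — 3 statements merged into one kernel-verified Lean document; each statement's English description precedes it below -/
import Mathlib

section
/- If every vertex of a finite graph G ≠ K₃ has odd degree, then G has an oriented perfect path double cover. -/
/-- An oriented perfect path double cover: for each vertex `v`, a directed path
`P v` (a nonempty list of distinct vertices, consecutive ones adjacent) starting
at `v`, such that each vertex is the end of exactly one path, and each arc of the
symmetric orientation lies in exactly one path. -/
def HasOPPDC {V : Type*} (G : SimpleGraph V) : Prop :=
  ∃ P : V → List V,
    (∀ v, P v ≠ [] ∧ (P v).Nodup ∧ (P v).Chain' G.Adj ∧ (P v).head? = some v) ∧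
    (∀ w : V, ∃! v, (P v).getLast? = some w) ∧
    (∀ a b : V, G.Adj a b → ∃! v, (a, b) ∈ (P v).zip (P v).tail)

/-!
By a theorem of Lovász, the edges of a finite graph with all degrees odd decompose into paths such
that every vertex is an end of exactly one of them. Traversing each of these paths in both
directions gives an oriented perfect path double cover.

The decomposition is built by putting deleted edges back. Suppose that `G - xb` is decomposed into
paths and that `x` and all neighbours of `b` are ends. If the path starting at `x` avoids `b`, it
can be extended by `xb`. If it enters `b` from `u`, replacing `ub` by `xb` in it leaves the same
problem with `ub` missing, and this rerouting cannot go on forever. In both cases one end moves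
from `x` to `b`.

An induction on the edges has to allow for two nonadjacent vertices of even degree, one of which
becomes a double end; a one-vertex path counts as having its vertex as a double end.
-/

namespace PathDecomposition

variable {V : Type*}

/-- The multiset of edges traversed by a list of vertices. -/
def edges : List V → Multiset (Sym2 V)
  | [] => 0
  | [_] => 0
  | a :: b :: l => s(a, b) ::ₘ edges (b :: l)

/-- The first and the last vertex of a list. A one-vertex list has that vertex as an end twice. -/
def ends (p : List V) : Multiset V :=
  (p.head?.toList : Multiset V) + (p.getLast?.toList : Multiset V)

/-- `L` is a family of (undirected) paths, possibly with a single vertex, whose edges add up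
to `E` and whose ends add up to `D`, both with multiplicity. -/
structure IsPathDecomposition (L : Multiset (List V)) (E : Multiset (Sym2 V)) (D : Multiset V) :
    Prop where
  nodup : ∀ p ∈ L, p.Nodup
  bind_edges : L.bind edges = E
  bind_ends : L.bind ends = D

/-- The paths of the family `L`, each in both directions. -/
def orientations (L : Multiset (List V)) : Multiset (List V) := L + L.map List.reverse

section List

theorem edges_append_cons {l : List V} {u b : V} (hu : l.getLast? = some u) (r : List V) :
    edges (l ++ b :: r) = s(u, b) ::ₘ (edges l + edges (b :: r)) := by
  induction l with
  | nil => simp at hu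
  | cons a l ih =>
    cases l with
    | nil => simp_all [edges]
    | cons c l =>
      simp only [List.cons_append, edges, List.getLast?_cons_cons] at ih hu ⊢
      rw [ih hu, Multiset.cons_swap, Multiset.cons_add]

theorem edges_reverse (p : List V) : edges p.reverse = edges p := by
  induction p with
  | nil => rfl
  | cons a p ih =>
    cases p with
    | nil => rfl
    | cons b p =>
      rw [List.reverse_cons, edges_append_cons (u := b) (by simp), ih]
      simp [edges, Sym2.eq_swap]

theorem ends_reverse (p : List V) : ends p.reverse = ends p := by
  simp [ends, add_comm]

theorem mem_ends {p : List V} {v : V} :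
    v ∈ ends p ↔ p.head? = some v ∨ p.getLast? = some v := by
  simp [ends]

theorem pair_infix_cons_cons {α : Type*} {p : List α} {a b c d : α} :
    [a, b] <:+: c :: d :: p ↔ (a = c ∧ b = d) ∨ [a, b] <:+: d :: p := by
  rw [List.infix_cons_iff]
  simp [List.cons_prefix_cons]

theorem pair_infix_iff_mem_zip_tail {α : Type*} {p : List α} {a b : α} :
    [a, b] <:+: p ↔ (a, b) ∈ p.zip p.tail := by
  induction p with
  | nil => simp
  | cons c p ih =>
    cases p with
    | nil => simp [List.infix_cons_iff]
    | cons d p =>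
      rw [pair_infix_cons_cons, ih]
      simp

theorem not_pair_infix_swap {α : Type*} {p : List α} {a b : α} (hp : p.Nodup)
    (hab : [a, b] <:+: p) : ¬ [b, a] <:+: p := by
  induction p with
  | nil => simp
  | cons c p ih =>
    cases p with
    | nil => simp [List.infix_cons_iff]
    | cons d p =>
      obtain ⟨hc, hp⟩ := List.nodup_cons.1 hp
      rw [pair_infix_cons_cons] at hab ⊢
      rcases hab with ⟨rfl, rfl⟩ | hab
      · rintro (⟨rfl, -⟩ | hba)
        · simp at hc
        · exact hc (hba.subset (by simp))
      · rintro (⟨rfl, -⟩ | hba)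
        · exact hc (hab.subset (by simp))
        · exact ih hp hab hba

theorem mem_edges {p : List V} {a b : V} :
    s(a, b) ∈ edges p ↔ [a, b] <:+: p ∨ [b, a] <:+: p := by
  induction p with
  | nil => simp [edges]
  | cons c p ih =>
    cases p with
    | nil => simp [edges, List.infix_cons_iff]
    | cons d p =>
      rw [edges, Multiset.mem_cons, ih, pair_infix_cons_cons, pair_infix_cons_cons, Sym2.eq_iff]
      tauto

end List

section Orientations

variable {L : Multiset (List V)} {E : Multiset (Sym2 V)} {D : Multiset V} {p q : List V}

theorem mem_orientations : p ∈ orientations L ↔ p ∈ L ∨ p.reverse ∈ L := by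
  simp [orientations, List.reverse_eq_iff]

theorem mem_orientations_cons :
    q ∈ orientations (p ::ₘ L) ↔ q = p ∨ q = p.reverse ∨ q ∈ orientations L := by
  simp only [mem_orientations, Multiset.mem_cons, List.reverse_eq_iff]
  tauto

theorem reverse_mem_orientations : p.reverse ∈ orientations L ↔ p ∈ orientations L := by
  simp [mem_orientations, or_comm]

theorem exists_eq_cons_of_mem_orientations (hp : p ∈ orientations L) :
    ∃ L', L = p ::ₘ L' ∨ L = p.reverse ::ₘ L' := by
  rcases mem_orientations.1 hp with hp | hp
  all_goals obtain ⟨L', h⟩ := Multiset.exists_cons_of_mem hp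
  · exact ⟨L', .inl h⟩
  · exact ⟨L', .inr h⟩

theorem mem_bind_iff_exists_orientation {α : Type*} {f : List V → Multiset α}
    (hf : ∀ p, f p.reverse = f p) {x : α} :
    x ∈ L.bind f ↔ ∃ p ∈ orientations L, x ∈ f p := by
  rw [Multiset.mem_bind]
  refine ⟨fun ⟨p, hp, hx⟩ => ⟨p, mem_orientations.2 (.inl hp), hx⟩, fun ⟨p, hp, hx⟩ => ?_⟩
  rcases mem_orientations.1 hp with hp | hp
  · exact ⟨p, hp, hx⟩
  · exact ⟨p.reverse, hp, by rwa [hf]⟩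

theorem nodup_apply_of_nodup_bind {α : Type*} {f : List V → Multiset α}
    (hf : ∀ p, f p.reverse = f p) (hL : (L.bind f).Nodup) (hp : p ∈ orientations L) :
    (f p).Nodup :=
  (mem_orientations.1 hp).elim ((Multiset.nodup_bind.1 hL).1 p)
    fun hp => hf p ▸ (Multiset.nodup_bind.1 hL).1 _ hp

theorem eq_or_eq_reverse_of_nodup_bind {α : Type*} {f : List V → Multiset α}
    (hf : ∀ p, f p.reverse = f p) (hL : (L.bind f).Nodup) (hp : p ∈ orientations L)
    (hq : q ∈ orientations L) {x : α} (hxp : x ∈ f p) (hxq : x ∈ f q) :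
    q = p ∨ q = p.reverse := by
  obtain ⟨L', hL'⟩ := exists_eq_cons_of_mem_orientations hp
  have hbind : L.bind f = f p + L'.bind f := by rcases hL' with rfl | rfl <;> simp [hf]
  have hmem : q = p ∨ q = p.reverse ∨ q ∈ orientations L' := by
    rcases hL' with rfl | rfl <;> simpa [mem_orientations_cons, or_left_comm] using hq
  rw [hbind, Multiset.nodup_add] at hL
  have hq' : q ∉ orientations L' := fun hq' =>
    Multiset.disjoint_left.1 hL.2.2 hxp ((mem_bind_iff_exists_orientation hf).2 ⟨q, hq', hxq⟩)
  tauto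

namespace IsPathDecomposition

theorem nodup_of_mem_orientations (h : IsPathDecomposition L E D) (hp : p ∈ orientations L) :
    p.Nodup :=
  (mem_orientations.1 hp).elim (h.nodup p) fun hp => List.nodup_reverse.1 (h.nodup _ hp)

theorem mem_of_infix (h : IsPathDecomposition L E D) (hp : p ∈ orientations L) {a b : V}
    (hab : [a, b] <:+: p) : s(a, b) ∈ E :=
  h.bind_edges ▸ (mem_bind_iff_exists_orientation edges_reverse).2
    ⟨p, hp, mem_edges.2 (.inl hab)⟩

theorem exists_orientation_infix (h : IsPathDecomposition L E D) {a b : V} (hab : s(a, b) ∈ E) :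
    ∃ p ∈ orientations L, [a, b] <:+: p := by
  rw [← h.bind_edges, mem_bind_iff_exists_orientation edges_reverse] at hab
  obtain ⟨p, hp, hab⟩ := hab
  rcases mem_edges.1 hab with hab | hba
  · exact ⟨p, hp, hab⟩
  · exact ⟨p.reverse, reverse_mem_orientations.2 hp, by simpa using List.reverse_infix.2 hba⟩

theorem exists_orientation_head? (h : IsPathDecomposition L E D) {v : V} (hv : v ∈ D) :
    ∃ p ∈ orientations L, p.head? = some v := by
  rw [← h.bind_ends, mem_bind_iff_exists_orientation ends_reverse] at hv
  obtain ⟨p, hp, hv⟩ := hv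
  rcases mem_ends.1 hv with hv | hv
  · exact ⟨p, hp, hv⟩
  · exact ⟨p.reverse, reverse_mem_orientations.2 hp, by simpa using hv⟩

theorem eq_of_infix (h : IsPathDecomposition L E D) (hE : E.Nodup) (hp : p ∈ orientations L)
    (hq : q ∈ orientations L) {a b : V} (hpab : [a, b] <:+: p) (hqab : [a, b] <:+: q) :
    p = q := by
  rcases eq_or_eq_reverse_of_nodup_bind edges_reverse (h.bind_edges ▸ hE) hp hq
    (mem_edges.2 (.inl hpab)) (mem_edges.2 (.inl hqab)) with rfl | rfl
  · rfl
  · exact absurd (by simpa using List.reverse_infix.2 hqab)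
      (not_pair_infix_swap (h.nodup_of_mem_orientations hp) hpab)

theorem eq_of_head? (h : IsPathDecomposition L E D) (hD : D.Nodup) (hp : p ∈ orientations L)
    (hq : q ∈ orientations L) {v : V} (hpv : p.head? = some v) (hqv : q.head? = some v) :
    p = q := by
  rcases eq_or_eq_reverse_of_nodup_bind ends_reverse (h.bind_ends ▸ hD) hp hq
    (mem_ends.2 (.inl hpv)) (mem_ends.2 (.inl hqv)) with rfl | rfl
  · rfl
  · have hpn := nodup_apply_of_nodup_bind ends_reverse (h.bind_ends ▸ hD) hp
    rw [List.head?_reverse] at hqv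
    simp [ends, hpv, hqv] at hpn

theorem exists_cons (h : IsPathDecomposition L E D) (hp : p ∈ orientations L) :
    ∃ L', IsPathDecomposition (p ::ₘ L') E D ∧ orientations (p ::ₘ L') = orientations L := by
  obtain ⟨L', rfl | rfl⟩ := exists_eq_cons_of_mem_orientations hp
  · exact ⟨L', h, rfl⟩
  · refine ⟨L', ⟨?_, ?_, ?_⟩, ?_⟩
    · simpa using h.nodup
    · simpa [edges_reverse] using h.bind_edges
    · simpa [ends_reverse] using h.bind_ends
    · simp [orientations, Multiset.cons_swap p]

end IsPathDecomposition
end Orientations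

section Rerouting

variable {L : Multiset (List V)} {E : Multiset (Sym2 V)} {D : Multiset V} {b x u : V}

/-- There are vertices `v = v₀, …, vₙ` and paths `p₀, …, pₙ` in the family `P` of oriented paths
such that `pᵢ` starts at `vᵢ`, for `i < n` it enters `b` from `vᵢ₊₁`, and `pₙ` avoids `b`. An edge
from `v` to `b` missing in `P` can be supplied by rerouting these paths one after the other. -/
def HasReroutingChain (P : Multiset (List V)) (b : V) : ℕ → V → Prop
  | 0, v => ∃ p ∈ P, p.head? = some v ∧ b ∉ p
  | n + 1, v => ∃ t u r, t ++ b :: r ∈ P ∧ t.head? = some v ∧ t.getLast? = some u ∧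
      HasReroutingChain P b n u

theorem pair_infix_append_cons {t : List V} (ht : t.getLast? = some u) (r : List V) :
    [u, b] <:+: t ++ b :: r := by
  obtain ⟨t, rfl⟩ := List.getLast?_eq_some_iff.1 ht
  exact ⟨t, r, by simp⟩

namespace IsPathDecomposition

theorem cons_head {t : List V} (h : IsPathDecomposition ((x :: t) ::ₘ L) E (x ::ₘ D))
    (hb : b ∉ x :: t) : IsPathDecomposition ((b :: x :: t) ::ₘ L) (s(x, b) ::ₘ E) (b ::ₘ D) where
  nodup p hp := by
    rcases Multiset.mem_cons.1 hp with rfl | hp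
    · exact List.nodup_cons.2 ⟨hb, h.nodup _ (by simp)⟩
    · exact h.nodup p (by simp [hp])
  bind_edges := by
    rw [← h.bind_edges]
    simp [edges, Sym2.eq_swap]
  bind_ends := by
    have hD := h.bind_ends
    simp only [Multiset.cons_bind, ends, List.head?_cons, Option.toList_some,
      List.getLast?_cons_cons, Multiset.coe_singleton, Multiset.singleton_add, Multiset.cons_add,
      Multiset.cons_inj_right] at hD ⊢
    exact hD

theorem reverse_initial_segment {t r : List V} (hx : t.head? = some x)
    (hu : t.getLast? = some u)
    (h : IsPathDecomposition ((t ++ b :: r) ::ₘ L) (s(u, b) ::ₘ E) (x ::ₘ D)) :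
    IsPathDecomposition ((t.reverse ++ b :: r) ::ₘ L) (s(x, b) ::ₘ E) (u ::ₘ D) where
  nodup p hp := by
    rcases Multiset.mem_cons.1 hp with rfl | hp
    · exact ((List.reverse_perm t).append_right _).nodup_iff.2 (h.nodup _ (by simp))
    · exact h.nodup p (by simp [hp])
  bind_edges := by
    have hE := h.bind_edges
    rw [Multiset.cons_bind, edges_append_cons hu, Multiset.cons_add,
      Multiset.cons_inj_right] at hE
    rw [Multiset.cons_bind, edges_append_cons (u := x) (by simpa using hx), edges_reverse,
      Multiset.cons_add, hE]
  bind_ends := by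
    have hends : ∀ {l : List V} {v : V}, l.head? = some v →
        ends (l ++ b :: r) = v ::ₘ ((b :: r).getLast?.toList : Multiset V) := by
      intro l v hv
      rw [ends, List.getLast?_append_cons, List.head?_append, hv]
      rfl
    have hD := h.bind_ends
    rw [Multiset.cons_bind, hends hx, Multiset.cons_add, Multiset.cons_inj_right] at hD
    rw [Multiset.cons_bind, hends (v := u) (by simpa using hu), Multiset.cons_add, hD]

end IsPathDecomposition

theorem HasReroutingChain.reverse_initial_segment {t r : List V} {v : V} {n : ℕ}
    (hp : (t ++ b :: r).Nodup) (hx : t.head? = some x)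
    (hxb : ∀ p ∈ orientations ((t ++ b :: r) ::ₘ L), ¬ [x, b] <:+: p) (hvx : v ≠ x)
    (h : HasReroutingChain (orientations ((t ++ b :: r) ::ₘ L)) b n v) :
    HasReroutingChain (orientations ((t.reverse ++ b :: r) ::ₘ L)) b n v := by
  have hbt : b ∉ t := fun hb => List.disjoint_of_nodup_append hp hb (by simp)
  have hbr : b ∉ r := (List.nodup_cons.1 (List.nodup_append.1 hp).2.1).1
  induction n generalizing v with
  | zero =>
    obtain ⟨p, hp, hpv, hbp⟩ := h
    refine ⟨p, ?_, hpv, hbp⟩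
    rcases mem_orientations_cons.1 hp with rfl | rfl | hp
    · simp at hbp
    · simp at hbp
    · exact mem_orientations_cons.2 (.inr (.inr hp))
  | succ n ih =>
    obtain ⟨t', u, r', hp, hv, hu, hchain⟩ := h
    have hux : u ≠ x := by
      rintro rfl
      exact hxb _ hp (pair_infix_append_cons hu r')
    have hchain' := ih hux hchain
    rcases mem_orientations_cons.1 hp with heq | heq | hp
    · obtain ⟨rfl, -⟩ := (List.append_cons_inj_of_notMem hbt hbr).1 heq.symm
      exact absurd (Option.some.inj (hv.symm.trans hx)) hvx
    · obtain ⟨rfl, -, rfl⟩ : r.reverse = t' ∧ b = b ∧ t.reverse = r' := by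
        rw [← List.append_cons_inj_of_notMem (by simpa using hbr) (by simpa using hbt), heq]
        simp
      exact ⟨_, u, t, mem_orientations_cons.2 (.inr (.inl (by simp))), hv, hu, hchain'⟩
    · exact ⟨t', u, r', mem_orientations_cons.2 (.inr (.inr hp)), hv, hu, hchain'⟩

theorem IsPathDecomposition.exists_of_hasReroutingChain {n : ℕ}
    (h : IsPathDecomposition L E (x ::ₘ D)) (hE : (s(x, b) ::ₘ E).Nodup)
    (hx : HasReroutingChain (orientations L) b n x) :
    ∃ L', IsPathDecomposition L' (s(x, b) ::ₘ E) (b ::ₘ D) := by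
  induction n generalizing L E x with
  | zero =>
    obtain ⟨p, hp, hpx, hb⟩ := hx
    obtain ⟨t, rfl⟩ := List.head?_eq_some_iff.1 hpx
    obtain ⟨L, h, -⟩ := h.exists_cons hp
    exact ⟨_, h.cons_head hb⟩
  | succ n ih =>
    obtain ⟨t, u, r, hp, hhead, hlast, hu⟩ := hx
    have hub := h.mem_of_infix hp (pair_infix_append_cons hlast r)
    obtain ⟨E, rfl⟩ := Multiset.exists_cons_of_mem hub
    obtain ⟨L₀, h₀, hL₀⟩ := h.exists_cons hp
    have hxb : ∀ p ∈ orientations L, ¬ [x, b] <:+: p := fun p hp hinf =>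
      (Multiset.nodup_cons.1 hE).1 (h.mem_of_infix hp hinf)
    have hux : u ≠ x := by
      rintro rfl
      exact hxb _ hp (pair_infix_append_cons hlast r)
    have hu' := HasReroutingChain.reverse_initial_segment (h.nodup_of_mem_orientations hp) hhead
      (hL₀ ▸ hxb) hux (hL₀ ▸ hu)
    rw [Multiset.cons_swap] at hE ⊢
    exact ih (h₀.reverse_initial_segment hhead hlast) hE hu'

theorem exists_eq_append_cons_of_mem {p : List V} {v : V} (hv : p.head? = some v)
    (hvb : v ≠ b) (hb : b ∈ p) :
    ∃ t u r, p = t ++ b :: r ∧ t.head? = some v ∧ t.getLast? = some u := by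
  obtain ⟨t, r, rfl⟩ := List.append_of_mem hb
  have ht : t ≠ [] := by
    rintro rfl
    exact hvb (by simpa using hv.symm)
  refine ⟨t, t.getLast ht, r, rfl, ?_, List.getLast?_eq_some_getLast ht⟩
  rwa [List.head?_append_of_ne_nil _ ht] at hv

theorem IsPathDecomposition.exists_hasReroutingChain [Finite V]
    (h : IsPathDecomposition L E D) (hE : E.Nodup) (hxb : s(x, b) ∉ E)
    (hD : ∀ v, v = x ∨ s(v, b) ∈ E → v ≠ b ∧ v ∈ D) :
    ∃ n, HasReroutingChain (orientations L) b n x := by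
  by_contra! hx
  -- Otherwise each vertex of `T` starts a path entering `b` from a vertex of `T`, and this vertex
  -- determines the path. So the resulting self-map of `T` is onto, although `x` is not a value.
  let T : Set V := {v | (v = x ∨ s(v, b) ∈ E) ∧ ∀ n, ¬ HasReroutingChain (orientations L) b n v}
  have step : ∀ v : T, ∃ u : T, s(u.1, b) ∈ E ∧
      ∃ p ∈ orientations L, p.head? = some v.1 ∧ [u.1, b] <:+: p := by
    rintro ⟨v, hv, hvn⟩
    obtain ⟨hvb, hvD⟩ := hD v hv
    obtain ⟨p, hp, hpv⟩ := h.exists_orientation_head? hvD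
    have hb : b ∈ p := by
      by_contra hb
      exact hvn 0 ⟨p, hp, hpv, hb⟩
    obtain ⟨t, u, r, rfl, htv, htu⟩ := exists_eq_append_cons_of_mem hpv hvb hb
    have hub := pair_infix_append_cons (b := b) htu r
    have hubE := h.mem_of_infix hp hub
    exact ⟨⟨u, .inr hubE, fun n hn => hvn (n + 1) ⟨t, u, r, hp, htv, htu, hn⟩⟩, hubE, _, hp, hpv,
      hub⟩
  choose next hnextE p hp hhead hinf using step
  have hinj : Function.Injective next := fun v w hvw => by
    have hpq : p v = p w := h.eq_of_infix hE (hp v) (hp w) (hinf v) (hvw ▸ hinf w)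
    exact Subtype.ext (Option.some.inj ((hhead v).symm.trans (hpq ▸ hhead w)))
  obtain ⟨v, hv⟩ := Finite.surjective_of_injective hinj ⟨x, .inl rfl, hx⟩
  exact hxb (by simpa [hv] using hnextE v)

theorem IsPathDecomposition.exists_cons_edge [Finite V] (h : IsPathDecomposition L E (x ::ₘ D))
    (hE : (s(x, b) ::ₘ E).Nodup) (hD : ∀ v, v = x ∨ s(v, b) ∈ E → v ≠ b ∧ v ∈ x ::ₘ D) :
    ∃ L', IsPathDecomposition L' (s(x, b) ::ₘ E) (b ::ₘ D) :=
  have ⟨hxb, hE'⟩ := Multiset.nodup_cons.1 hE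
  have ⟨_, hn⟩ := h.exists_hasReroutingChain hE' hxb hD
  h.exists_of_hasReroutingChain hE hn

end Rerouting

section Graph

variable {G : SimpleGraph V} {D : Multiset V} {a b x y v : V}

theorem deleteEdges_singleton_lt (hxy : G.Adj x y) : G.deleteEdges {s(x, y)} < G :=
  (G.deleteEdges_le _).lt_of_not_ge fun h => by simpa using h hxy

theorem support_deleteEdges_subset (G : SimpleGraph V) (s : Set (Sym2 V)) :
    (G.deleteEdges s).support ⊆ G.support :=
  SimpleGraph.support_mono (G.deleteEdges_le s)

/-- The edges of `G` decompose into paths (possibly with one-vertex paths added) whose ends form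
the multiset `D`. -/
def HasPathDecomposition (G : SimpleGraph V) (D : Multiset V) : Prop :=
  ∃ L E, IsPathDecomposition L E D ∧ E.Nodup ∧ ∀ e, e ∈ E ↔ e ∈ G.edgeSet

theorem hasPathDecomposition_bot : HasPathDecomposition (⊥ : SimpleGraph V) 0 :=
  ⟨0, 0, ⟨by simp, rfl, rfl⟩, Multiset.nodup_zero, by simp⟩

namespace HasPathDecomposition

theorem cons_cons_self (h : HasPathDecomposition G D) (a : V) :
    HasPathDecomposition G (a ::ₘ a ::ₘ D) := by
  obtain ⟨L, E, hL, hE, hEG⟩ := h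
  refine ⟨[a] ::ₘ L, E, ⟨?_, ?_, ?_⟩, hE, hEG⟩
  · simpa using hL.nodup
  · simp [edges, hL.bind_edges]
  · simp [ends, hL.bind_ends]

theorem of_deleteEdges [Finite V] (hxb : G.Adj x b)
    (h : HasPathDecomposition (G.deleteEdges {s(x, b)}) (x ::ₘ D))
    (hD : ∀ v ≠ x, G.Adj v b → v ∈ D) : HasPathDecomposition G (b ::ₘ D) := by
  obtain ⟨L, E, hL, hE, hEG⟩ := h
  have hEG' : ∀ e, e ∈ s(x, b) ::ₘ E ↔ e ∈ G.edgeSet := by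
    intro e
    by_cases he : e = s(x, b) <;> simp [hEG, he, hxb]
  have hE' : (s(x, b) ::ₘ E).Nodup := Multiset.nodup_cons.2 ⟨by simp [hEG], hE⟩
  have hends : ∀ v, v = x ∨ s(v, b) ∈ E → v ≠ b ∧ v ∈ x ::ₘ D := by
    rintro v (rfl | hv)
    · exact ⟨hxb.ne, Multiset.mem_cons_self v D⟩
    · have hvb : G.Adj v b := (hEG' s(v, b)).1 (Multiset.mem_cons_of_mem hv)
      by_cases hvx : v = x
      · exact ⟨hvb.ne, hvx ▸ Multiset.mem_cons_self v D⟩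
      · exact ⟨hvb.ne, Multiset.mem_cons_of_mem (hD v hvx hvb)⟩
  obtain ⟨L', hL'⟩ := hL.exists_cons_edge hE' hends
  exact ⟨L', _, hL', hE', hEG'⟩

end HasPathDecomposition

open Classical in
/-- The vertices of odd degree. -/
noncomputable def oddVertices [Fintype V] (G : SimpleGraph V) : Finset V := {v | Odd (G.degree v)}

variable [Fintype V]

theorem mem_oddVertices [DecidableRel G.Adj] : v ∈ oddVertices G ↔ Odd (G.degree v) := by
  rw [oddVertices, Finset.mem_filter_univ]
  congr!

theorem oddVertices_bot : oddVertices (⊥ : SimpleGraph V) = ∅ := by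
  classical
  exact Finset.eq_empty_of_forall_notMem fun v => by simp [mem_oddVertices]

theorem mem_oddVertices_deleteEdges (hxy : G.Adj x y) :
    v ∈ oddVertices (G.deleteEdges {s(x, y)}) ↔ (v ∈ oddVertices G ↔ v ≠ x ∧ v ≠ y) := by
  classical
  have herase : (G.deleteEdges {s(x, y)}).incidenceFinset v =
      (G.incidenceFinset v).erase s(x, y) := by
    ext e
    simp [SimpleGraph.incidenceSet, and_comm, and_left_comm]
  have hmem : s(x, y) ∈ G.incidenceFinset v ↔ ¬ (v ≠ x ∧ v ≠ y) := by
    simp [SimpleGraph.incidenceSet, hxy, or_iff_not_imp_left]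
  rw [mem_oddVertices, mem_oddVertices, ← SimpleGraph.card_incidenceFinset_eq_degree,
    ← SimpleGraph.card_incidenceFinset_eq_degree, herase]
  by_cases hv : v ≠ x ∧ v ≠ y
  · rw [Finset.erase_eq_of_notMem (by tauto)]
    tauto
  · rw [← Finset.card_erase_add_one (hmem.2 hv), Nat.odd_add_one]
    tauto

theorem val_oddVertices_eq_cons_cons (hxy : G.Adj x y) (hx : x ∈ oddVertices G)
    (hy : y ∈ oddVertices G) :
    (oddVertices G).val = x ::ₘ y ::ₘ (oddVertices (G.deleteEdges {s(x, y)})).val := by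
  have := hxy.ne
  have hmem := fun v => mem_oddVertices_deleteEdges (v := v) hxy
  have hy' : y ∉ oddVertices (G.deleteEdges {s(x, y)}) := by simp_all
  have hx' : x ∉ Finset.cons y _ hy' := by simp_all
  suffices oddVertices G = Finset.cons x _ hx' from congrArg Finset.val this
  ext v
  grind

theorem cons_val_oddVertices_deleteEdges (hxy : G.Adj x y) (hx : x ∈ oddVertices G)
    (hy : y ∉ oddVertices G) :
    x ::ₘ (oddVertices (G.deleteEdges {s(x, y)})).val = y ::ₘ (oddVertices G).val := by
  have hmem := fun v => mem_oddVertices_deleteEdges (v := v) hxy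
  have hx' : x ∉ oddVertices (G.deleteEdges {s(x, y)}) := by simp_all
  suffices Finset.cons x _ hx' = Finset.cons y _ hy from congrArg Finset.val this
  ext v
  have := hxy.ne
  grind

theorem val_oddVertices_deleteEdges_eq_cons_cons (hxy : G.Adj x y) (hx : x ∉ oddVertices G)
    (hy : y ∉ oddVertices G) :
    (oddVertices (G.deleteEdges {s(x, y)})).val = x ::ₘ y ::ₘ (oddVertices G).val := by
  have hmem := fun v => mem_oddVertices_deleteEdges (v := v) hxy
  have hx' : x ∉ Finset.cons y _ hy := by
    have := hxy.ne
    simp_all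
  suffices oddVertices (G.deleteEdges {s(x, y)}) = Finset.cons x _ hx' from
    congrArg Finset.val this
  ext v
  grind

/-- `a` and `b` are nonadjacent vertices of even degree, and no other nonisolated vertex has even
degree: the graphs for which Lovász's induction goes through. -/
structure IsEvenPair (G : SimpleGraph V) (a b : V) : Prop where
  ne : a ≠ b
  not_adj : ¬ G.Adj a b
  left_notMem : a ∉ oddVertices G
  right_notMem : b ∉ oddVertices G
  support_subset : ∀ v ∈ G.support, v = a ∨ v = b ∨ v ∈ oddVertices G

theorem IsEvenPair.symm (h : IsEvenPair G a b) : IsEvenPair G b a where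
  ne := h.ne.symm
  not_adj hba := h.not_adj hba.symm
  left_notMem := h.right_notMem
  right_notMem := h.left_notMem
  support_subset v hv := or_left_comm.1 (h.support_subset v hv)

/-- For each even pair of `G`, one of its two vertices can serve as a double end of a path
decomposition whose other ends are the odd vertices. -/
def EvenPairDecomposable (G : SimpleGraph V) : Prop :=
  ∀ ⦃a b⦄, IsEvenPair G a b →
    HasPathDecomposition G (a ::ₘ a ::ₘ (oddVertices G).val) ∨
      HasPathDecomposition G (b ::ₘ b ::ₘ (oddVertices G).val)

theorem IsEvenPair.mem_oddVertices_of_adj (h : IsEvenPair G a b) {w : V} (hvw : G.Adj v w)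
    (ha : v ≠ a) (hb : v ≠ b) : v ∈ oddVertices G :=
  ((h.support_subset v (G.mem_support.2 ⟨w, hvw⟩)).resolve_left ha).resolve_left hb

theorem IsEvenPair.mem_oddVertices_of_adj_right (h : IsEvenPair G a b) (hvb : G.Adj v b) :
    v ∈ oddVertices G :=
  h.mem_oddVertices_of_adj hvb (fun hva => h.not_adj (hva ▸ hvb)) hvb.ne

theorem isEvenPair_deleteEdges (hG : ∀ v ∈ G.support, v ∈ oddVertices G) (hab : G.Adj a b) :
    IsEvenPair (G.deleteEdges {s(a, b)}) a b where
  ne := hab.ne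
  not_adj := by simp
  left_notMem := by simp [mem_oddVertices_deleteEdges hab, hG a (G.mem_support.2 ⟨b, hab⟩)]
  right_notMem := by simp [mem_oddVertices_deleteEdges hab, hG b (G.mem_support.2 ⟨a, hab.symm⟩)]
  support_subset v hv := by
    have := hG v (support_deleteEdges_subset G _ hv)
    rw [mem_oddVertices_deleteEdges hab]
    tauto

theorem hasPathDecomposition_val_oddVertices_of_forall_lt
    (ih : ∀ G' < G, EvenPairDecomposable G') (hG : ∀ v ∈ G.support, v ∈ oddVertices G) :
    HasPathDecomposition G (oddVertices G).val := by
  by_cases hbot : G = ⊥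
  · rw [hbot, oddVertices_bot]
    exact hasPathDecomposition_bot
  obtain ⟨a, b, hab⟩ := SimpleGraph.ne_bot_iff_exists_adj.1 hbot
  have hpair := isEvenPair_deleteEdges hG hab
  rw [val_oddVertices_eq_cons_cons hab (hG a (G.mem_support.2 ⟨b, hab⟩))
    (hG b (G.mem_support.2 ⟨a, hab.symm⟩))]
  rcases ih _ (deleteEdges_singleton_lt hab) hpair with h | h
  · rw [Multiset.cons_swap]
    refine h.of_deleteEdges hab fun v hva hvb => Multiset.mem_cons_of_mem ?_
    exact hpair.mem_oddVertices_of_adj_right (by simp [hvb, hva, hab.ne'])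
  · refine .of_deleteEdges hab.symm (by rwa [Sym2.eq_swap]) fun v hvb hva => ?_
    refine Multiset.mem_cons_of_mem (hpair.symm.mem_oddVertices_of_adj_right ?_)
    simp [hva, hvb, hab.ne]

theorem IsEvenPair.hasPathDecomposition_of_common_neighbor
    (ih : ∀ G' < G, EvenPairDecomposable G') (h : IsEvenPair G a b) (hxa : G.Adj x a)
    (hxb : G.Adj x b) : HasPathDecomposition G (b ::ₘ b ::ₘ (oddVertices G).val) := by
  -- Deleting `xb` and `ax` makes `a` and `b` odd without changing the parity at `x`.
  set G₁ := G.deleteEdges {s(x, b)} with hG₁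
  have hax₁ : G₁.Adj a x := by simp [hG₁, hxa.symm, h.ne, hxa.ne']
  set G₂ := G₁.deleteEdges {s(a, x)}
  have hx : x ∈ oddVertices G := h.mem_oddVertices_of_adj_right hxb
  have hmem₁ {v} := mem_oddVertices_deleteEdges (v := v) hxb
  have ha₁ : a ∉ oddVertices G₁ := by simp [hG₁, hmem₁, h.left_notMem, hxa.ne', h.ne]
  have hx₁ : x ∉ oddVertices G₁ := by simp [hG₁, hmem₁, hx]
  have hodd₁ := cons_val_oddVertices_deleteEdges hxb hx h.right_notMem
  have hodd₂ := val_oddVertices_deleteEdges_eq_cons_cons hax₁ ha₁ hx₁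
  rw [hodd₁] at hodd₂
  have hlt : G₂ < G := (deleteEdges_singleton_lt hax₁).trans (deleteEdges_singleton_lt hxb)
  have hG₂_odd : ∀ v ∈ G₂.support, v ∈ oddVertices G₂ := fun v hv => by
    rw [← Finset.mem_val, hodd₂]
    simpa using h.support_subset v
      (support_deleteEdges_subset G _ (support_deleteEdges_subset G₁ _ hv))
  have hdec₂ := hasPathDecomposition_val_oddVertices_of_forall_lt
    (fun G' hG' => ih G' (hG'.trans hlt)) hG₂_odd
  rw [hodd₂] at hdec₂
  have hdec₁ := hdec₂.of_deleteEdges hax₁ fun v hva hvx => by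
    simpa [hva] using h.support_subset v
      (support_deleteEdges_subset G _ (G₁.mem_support.2 ⟨x, hvx⟩))
  exact hdec₁.of_deleteEdges hxb fun v _ hvb =>
    Multiset.mem_cons_of_mem (h.mem_oddVertices_of_adj_right hvb)

theorem IsEvenPair.deleteEdges (h : IsEvenPair G a b) (hxa : G.Adj x a) (hxb : ¬ G.Adj x b) :
    IsEvenPair (G.deleteEdges {s(x, a)}) x b := by
  have hne : x ≠ b := fun hxb' => h.not_adj (hxb' ▸ hxa.symm)
  have hx : x ∈ oddVertices G := h.symm.mem_oddVertices_of_adj_right hxa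
  have hmem {v} := mem_oddVertices_deleteEdges (v := v) hxa
  refine ⟨hne, fun hadj => hxb (G.deleteEdges_le _ hadj), by simp [hmem, hx], ?_, fun v hv => ?_⟩
  · simp [hmem, h.right_notMem, hne.symm, h.ne.symm]
  · have := h.support_subset v (support_deleteEdges_subset G _ hv)
    have := h.left_notMem
    grind

theorem IsEvenPair.hasPathDecomposition_of_not_adj (ih : ∀ G' < G, EvenPairDecomposable G')
    (h : IsEvenPair G a b) (hxa : G.Adj x a) (hxb : ¬ G.Adj x b) :
    HasPathDecomposition G (a ::ₘ a ::ₘ (oddVertices G).val) ∨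
      HasPathDecomposition G (b ::ₘ b ::ₘ (oddVertices G).val) := by
  have hx : x ∈ oddVertices G := h.symm.mem_oddVertices_of_adj_right hxa
  have hodd := cons_val_oddVertices_deleteEdges hxa hx h.left_notMem
  rcases ih _ (deleteEdges_singleton_lt hxa) (h.deleteEdges hxa hxb) with hdec | hdec
  · left
    rw [hodd] at hdec
    exact hdec.of_deleteEdges hxa fun v _ hva =>
      Multiset.mem_cons_of_mem (h.symm.mem_oddVertices_of_adj_right hva)
  · right
    obtain ⟨D, hD⟩ := Multiset.exists_cons_of_mem (Finset.mem_def.1 hx)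
    rw [hD, Multiset.cons_swap, Multiset.cons_inj_right] at hodd
    rw [hodd, Multiset.cons_swap b a, Multiset.cons_swap b a, Sym2.eq_swap] at hdec
    rw [hD, Multiset.cons_swap b x, Multiset.cons_swap b x]
    refine hdec.of_deleteEdges hxa.symm fun v hva hvx => ?_
    have hv := h.mem_oddVertices_of_adj hvx hva fun hvb => hxb (hvb ▸ hvx.symm)
    rw [← Finset.mem_val, hD] at hv
    have hvD : v ∈ D := by simpa [hvx.ne] using hv
    simp [hvD]

theorem IsEvenPair.hasPathDecomposition_of_adj (ih : ∀ G' < G, EvenPairDecomposable G')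
    (h : IsEvenPair G a b) (hxa : G.Adj x a) :
    HasPathDecomposition G (a ::ₘ a ::ₘ (oddVertices G).val) ∨
      HasPathDecomposition G (b ::ₘ b ::ₘ (oddVertices G).val) := by
  by_cases hxb : G.Adj x b
  · exact .inr (h.hasPathDecomposition_of_common_neighbor ih hxa hxb)
  · exact h.hasPathDecomposition_of_not_adj ih hxa hxb

theorem evenPairDecomposable (G : SimpleGraph V) : EvenPairDecomposable G := by
  induction G using WellFoundedLT.induction with
  | ind G ih =>
  intro a b h
  by_cases ha : ∃ x, G.Adj x a
  · obtain ⟨x, hxa⟩ := ha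
    exact h.hasPathDecomposition_of_adj ih hxa
  by_cases hb : ∃ x, G.Adj x b
  · obtain ⟨x, hxb⟩ := hb
    exact (h.symm.hasPathDecomposition_of_adj ih hxb).symm
  refine .inl (HasPathDecomposition.cons_cons_self ?_ a)
  refine hasPathDecomposition_val_oddVertices_of_forall_lt ih fun v hv => ?_
  obtain ⟨w, hvw⟩ := G.mem_support.1 hv
  exact h.mem_oddVertices_of_adj hvw (fun hva => ha ⟨w, hva ▸ hvw.symm⟩)
    fun hvb => hb ⟨w, hvb ▸ hvw.symm⟩

theorem hasPathDecomposition_val_oddVertices (hG : ∀ v ∈ G.support, v ∈ oddVertices G) :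
    HasPathDecomposition G (oddVertices G).val :=
  hasPathDecomposition_val_oddVertices_of_forall_lt (fun G' _ => evenPairDecomposable G') hG

end Graph

section DoubleCover

variable {L : Multiset (List V)} {E : Multiset (Sym2 V)} {D : Multiset V}

namespace IsPathDecomposition

theorem existsUnique_orientation_head? (h : IsPathDecomposition L E D) (hD : D.Nodup) {v : V}
    (hv : v ∈ D) : ∃! p, p ∈ orientations L ∧ p.head? = some v :=
  have ⟨p, hp, hpv⟩ := h.exists_orientation_head? hv
  ⟨p, ⟨hp, hpv⟩, fun _ ⟨hq, hqv⟩ => h.eq_of_head? hD hq hp hqv hpv⟩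

theorem existsUnique_orientation_getLast? (h : IsPathDecomposition L E D) (hD : D.Nodup) {v : V}
    (hv : v ∈ D) : ∃! p, p ∈ orientations L ∧ p.getLast? = some v := by
  obtain ⟨p, ⟨hp, hpv⟩, hunique⟩ := h.existsUnique_orientation_head? hD hv
  refine ⟨p.reverse, ⟨reverse_mem_orientations.2 hp, by simpa using hpv⟩, fun q ⟨hq, hqv⟩ => ?_⟩
  rw [← hunique q.reverse ⟨reverse_mem_orientations.2 hq, by simpa using hqv⟩, List.reverse_reverse]

theorem existsUnique_orientation_infix (h : IsPathDecomposition L E D) (hE : E.Nodup) {a b : V}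
    (hab : s(a, b) ∈ E) : ∃! p, p ∈ orientations L ∧ [a, b] <:+: p :=
  have ⟨p, hp, hpab⟩ := h.exists_orientation_infix hab
  ⟨p, ⟨hp, hpab⟩, fun _ ⟨hq, hqab⟩ => h.eq_of_infix hE hq hp hqab hpab⟩

end IsPathDecomposition

theorem HasPathDecomposition.hasOPPDC {G : SimpleGraph V} (h : HasPathDecomposition G D)
    (hD : D.Nodup) (hmem : ∀ v, v ∈ D) : HasOPPDC G := by
  obtain ⟨L, E, hL, hE, hEG⟩ := h
  choose P hP hunique using fun v => hL.existsUnique_orientation_head? hD (hmem v)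
  have existsUnique_start {Q : List V → Prop} (hQ : ∃! p, p ∈ orientations L ∧ Q p)
      (hnil : ¬ Q []) : ∃! v, Q (P v) := by
    obtain ⟨p, ⟨hp, hpQ⟩, hpunique⟩ := hQ
    obtain ⟨v, t, rfl⟩ : ∃ v t, p = v :: t := List.exists_cons_of_ne_nil fun h => hnil (h ▸ hpQ)
    refine ⟨v, (congrArg Q (hunique v _ ⟨hp, rfl⟩)).mp hpQ, fun w hw => ?_⟩
    have hhead := (hP w).2
    rw [hpunique _ ⟨(hP w).1, hw⟩] at hhead
    exact (Option.some.inj hhead).symm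
  refine ⟨P, fun v => ⟨?_, hL.nodup_of_mem_orientations (hP v).1, ?_, (hP v).2⟩, fun w => ?_,
    fun a b hab => ?_⟩
  · intro hnil
    simpa [hnil] using (hP v).2
  · exact (List.isChain_isInfix (P v)).imp fun _ _ hab =>
      (hEG _).1 (hL.mem_of_infix (hP v).1 hab)
  · exact existsUnique_start (hL.existsUnique_orientation_getLast? hD (hmem w)) (by simp)
  · simp only [← pair_infix_iff_mem_zip_tail]
    exact existsUnique_start (hL.existsUnique_orientation_infix hE ((hEG _).2 hab)) (by simp)

end DoubleCover

end PathDecomposition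

open PathDecomposition in
/-- if every vertex of a finite graph `G ≠ K₃` has odd degree,
then `G` has an OPPDC. -/
theorem odd_degrees_hasOPPDC {V : Type*} [Fintype V] (G : SimpleGraph V)
    [DecidableRel G.Adj]
    (hK3 : ¬ Nonempty (G ≃g (⊤ : SimpleGraph (Fin 3))))
    (hodd : ∀ v : V, Odd (G.degree v)) :
    HasOPPDC G := by
  have hmem (v : V) : v ∈ oddVertices G := mem_oddVertices.2 (hodd v)
  have hdec : HasPathDecomposition G (oddVertices G).val :=
    hasPathDecomposition_val_oddVertices fun v _ => hmem v
  exact hdec.hasOPPDC (oddVertices G).nodup hmem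
end

section
/- Let v be a vertex of degree 3 in G with neighborhood N(v) = {x, y, z}, and suppose xz is not an edge of G. If the graph (G \ v) ∪ {xz} has an oriented perfect path double cover, then G has an oriented perfect path double cover. -/
section Arcs

variable {V W : Type*} {l s t : List V} {a b v : V}

/-- The arcs traversed by a directed path, given as the list of its vertices. -/
def pathArcs (l : List V) : Multiset (V × V) := (l.zip l.tail : List (V × V))

lemma pathArcs_nil : pathArcs ([] : List V) = 0 := rfl

lemma pathArcs_singleton (a : V) : pathArcs [a] = 0 := rfl

lemma pathArcs_cons_cons (a b : V) (l : List V) :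
    pathArcs (a :: b :: l) = {(a, b)} + pathArcs (b :: l) := rfl

lemma pathArcs_cons (h : l.head? = some b) : pathArcs (a :: l) = {(a, b)} + pathArcs l := by
  obtain ⟨l, rfl⟩ := List.head?_eq_some_iff.1 h
  exact pathArcs_cons_cons a b l

lemma pathArcs_append (hs : s.getLast? = some a) (ht : t.head? = some b) :
    pathArcs (s ++ t) = pathArcs s + {(a, b)} + pathArcs t := by
  induction s with
  | nil => simp at hs
  | cons c s ih =>
    cases s with
    | nil =>
      obtain rfl : c = a := by simpa using hs
      simp only [List.singleton_append, pathArcs_cons ht, pathArcs_singleton, zero_add]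
    | cons d s =>
      rw [List.getLast?_cons_cons] at hs
      rw [List.cons_append, List.cons_append, pathArcs_cons_cons, pathArcs_cons_cons,
        ← List.cons_append, ih hs]
      simp only [add_assoc]

lemma pathArcs_concat (h : l.getLast? = some a) (b : V) :
    pathArcs (l ++ [b]) = pathArcs l + {(a, b)} := by
  rw [pathArcs_append h rfl, pathArcs_singleton, add_zero]

lemma pathArcs_reverse (l : List V) : pathArcs l.reverse = (pathArcs l).map Prod.swap := by
  induction l with
  | nil => rfl
  | cons a l ih =>
    cases l with
    | nil => rfl
    | cons b l =>
      rw [List.reverse_cons, pathArcs_concat (by simp : _ = some b), ih, pathArcs_cons_cons,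
        Multiset.map_add, Multiset.map_singleton, Prod.swap_prod_mk, add_comm]

lemma pathArcs_map (f : V → W) (l : List V) :
    pathArcs (l.map f) = (pathArcs l).map (Prod.map f f) := by
  simp [pathArcs, List.zip_map, ← List.map_tail]

lemma nodup_pathArcs (h : l.Nodup) : (pathArcs l).Nodup := by
  refine Multiset.coe_nodup.2 (List.Nodup.of_map Prod.snd ?_)
  rw [List.map_snd_zip (by simp)]
  exact h.tail

lemma mem_and_mem_of_mem_pathArcs (h : (a, b) ∈ pathArcs l) : a ∈ l ∧ b ∈ l :=
  (List.of_mem_zip h).imp_right List.mem_of_mem_tail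

lemma mem_pathArcs_iff :
    (a, b) ∈ pathArcs l ↔ ∃ s t, l = s ++ t ∧ s.getLast? = some a ∧ t.head? = some b := by
  constructor
  · intro h
    induction l with
    | nil => simp [pathArcs_nil] at h
    | cons c l ih =>
      cases l with
      | nil => simp [pathArcs_singleton] at h
      | cons d l =>
        rcases Multiset.mem_add.1 (pathArcs_cons_cons c d l ▸ h) with h | h
        · obtain ⟨rfl, rfl⟩ := Prod.mk.inj (Multiset.mem_singleton.1 h)
          exact ⟨[a], b :: l, rfl, rfl, rfl⟩
        · obtain ⟨s, t, hst, hs, ht⟩ := ih h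
          exact ⟨c :: s, t, by rw [hst, List.cons_append], by simp [List.getLast?_cons, hs], ht⟩
  · rintro ⟨s, t, rfl, hs, ht⟩
    simp [pathArcs_append hs ht]

lemma isChain_iff_forall_mem_pathArcs {R : V → V → Prop} :
    l.IsChain R ↔ ∀ a b, (a, b) ∈ pathArcs l → R a b := by
  refine ⟨fun h a b hab ↦ ?_, fun h ↦ ?_⟩
  · obtain ⟨s, t, rfl, hs, ht⟩ := mem_pathArcs_iff.1 hab
    exact (List.isChain_append.1 h).2.2 a hs b ht
  · refine List.isChain_iff_forall_rel_of_append_cons_cons.2 fun a b s t hl ↦ h a b ?_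
    exact mem_pathArcs_iff.2 ⟨s ++ [a], b :: t, by simpa using hl, by simp, rfl⟩

lemma swap_notMem_pathArcs (hl : l.Nodup) (h : (a, b) ∈ pathArcs l) : (b, a) ∉ pathArcs l := by
  obtain ⟨s, t, rfl, hs, ht⟩ := mem_pathArcs_iff.1 h
  have has : a ∈ s := List.mem_of_getLast? hs
  have hbt : b ∈ t := List.mem_of_head? ht
  have hst : s.Disjoint t := List.disjoint_of_nodup_append hl
  rw [pathArcs_append hs ht]
  simp only [Multiset.mem_add, Multiset.mem_singleton, Prod.mk.injEq, not_or]
  exact ⟨⟨fun hba ↦ hst (mem_and_mem_of_mem_pathArcs hba).1 hbt,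
    fun ⟨hba, _⟩ ↦ hst has (hba ▸ hbt)⟩, fun hba ↦ hst has (mem_and_mem_of_mem_pathArcs hba).2⟩

lemma head?_ne_getLast?_of_mem_pathArcs (hl : l.Nodup) (h : (a, b) ∈ pathArcs l) :
    l.head? ≠ l.getLast? := by
  obtain ⟨s, t, rfl, hs, ht⟩ := mem_pathArcs_iff.1 h
  have hs0 : s ≠ [] := List.ne_nil_of_mem (List.mem_of_getLast? hs)
  have ht0 : t ≠ [] := List.ne_nil_of_mem (List.mem_of_head? ht)
  rw [List.head?_append_of_ne_nil _ hs0, List.getLast?_append_of_ne_nil _ ht0,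
    List.head?_eq_some_head hs0, List.getLast?_eq_some_getLast ht0]
  intro heq
  exact List.disjoint_of_nodup_append hl (List.head_mem hs0)
    (Option.some_injective _ heq ▸ List.getLast_mem ht0)

lemma head?_ne_of_mem_pathArcs (hl : l.Nodup) (h : (a, b) ∈ pathArcs l) : l.head? ≠ some b := by
  obtain ⟨s, t, rfl, hs, ht⟩ := mem_pathArcs_iff.1 h
  have hs0 : s ≠ [] := List.ne_nil_of_mem (List.mem_of_getLast? hs)
  rw [List.head?_append_of_ne_nil s hs0]
  exact fun hsb ↦ List.disjoint_of_nodup_append hl (List.mem_of_head? hsb) (List.mem_of_head? ht)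

lemma exists_subdivision (hl : l.Nodup) (hv : v ∉ l) (h : (a, b) ∈ pathArcs l) :
    ∃ l' : List V, l'.Nodup ∧ l'.head? = l.head? ∧ l'.getLast? = l.getLast? ∧
      pathArcs l' + {(a, b)} = pathArcs l + {(a, v), (v, b)} := by
  obtain ⟨s, t, rfl, hs, ht⟩ := mem_pathArcs_iff.1 h
  have hs0 : s ≠ [] := List.ne_nil_of_mem (List.mem_of_getLast? hs)
  have ht0 : t ≠ [] := List.ne_nil_of_mem (List.mem_of_head? ht)
  refine ⟨s ++ v :: t, ?_, ?_, ?_, ?_⟩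
  · exact List.nodup_middle.2 (List.nodup_cons.2 ⟨hv, hl⟩)
  · rw [List.head?_append_of_ne_nil _ hs0, List.head?_append_of_ne_nil _ hs0]
  · rw [List.append_cons, List.getLast?_append_of_ne_nil _ ht0,
      List.getLast?_append_of_ne_nil _ ht0]
  · rw [pathArcs_append hs (List.head?_cons ..), pathArcs_cons ht, pathArcs_append hs ht,
      Multiset.insert_eq_cons, ← Multiset.singleton_add]
    abel

lemma exists_split {c : V} (hl : l.Nodup) (hv : v ∉ l) (h : (a, b) ∈ pathArcs l)
    (hc : l.getLast? = some c) :
    ∃ l₁ l₂ : List V, l₁.Nodup ∧ l₂.Nodup ∧ l₁.head? = l.head? ∧ l₁.getLast? = some c ∧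
      l₂.head? = some b ∧ l₂.getLast? = some v ∧
      pathArcs l₁ + pathArcs l₂ + {(a, b)} = pathArcs l + {(a, v), (v, c), (c, v)} := by
  obtain ⟨s, t, rfl, hs, ht⟩ := mem_pathArcs_iff.1 h
  have hs0 : s ≠ [] := List.ne_nil_of_mem (List.mem_of_getLast? hs)
  have ht0 : t ≠ [] := List.ne_nil_of_mem (List.mem_of_head? ht)
  have htc : t.getLast? = some c := List.getLast?_append_of_ne_nil s ht0 ▸ hc
  have hct : c ∈ t := List.mem_of_getLast? htc
  refine ⟨s ++ [v, c], t ++ [v], ?_, ?_, ?_, ?_, ?_, List.getLast?_concat .., ?_⟩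
  · grind
  · grind
  · rw [List.head?_append_of_ne_nil s hs0, List.head?_append_of_ne_nil s hs0]
  · exact List.getLast?_append_of_ne_nil s (List.cons_ne_nil v [c])
  · rw [List.head?_append_of_ne_nil t ht0, ht]
  · simp only [pathArcs_append hs ht, pathArcs_append hs (List.head?_cons ..),
      pathArcs_concat htc, pathArcs_cons_cons, pathArcs_singleton, Multiset.insert_eq_cons,
      ← Multiset.singleton_add]
    abel

end Arcs

/-- A path double cover in multiset form: the directed paths in `M` start at the elements of `S`,
end at the elements of `S` and traverse the arcs in `E`, each with multiplicity. Multiplicities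
make rerouting a computation in commutative monoids. -/
structure IsPathCover {V : Type*} (S : Multiset V) (E : Multiset (V × V))
    (M : Multiset (List V)) : Prop where
  nodup : ∀ p ∈ M, p.Nodup
  starts : M.map List.head? = S.map some
  ends : M.map List.getLast? = S.map some
  arcs : (M.map pathArcs).sum = E

/-- The arcs in both directions between a centre `v` and the leaves `L`. -/
def starArcs {V : Type*} (v : V) (L : Multiset V) : Multiset (V × V) :=
  L.map (v, ·) + L.map (·, v)

lemma mem_starArcs {V : Type*} {v a b : V} {L : Multiset V} :
    (a, b) ∈ starArcs v L ↔ a = v ∧ b ∈ L ∨ b = v ∧ a ∈ L := by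
  simp [starArcs, eq_comm, and_comm]

lemma nodup_starArcs {V : Type*} {v : V} {L : Multiset V} (hL : L.Nodup) (hv : v ∉ L) :
    (starArcs v L).Nodup := by
  refine Multiset.nodup_add.2 ⟨hL.map (Prod.mk_right_injective v),
    hL.map (Prod.mk_left_injective v), Multiset.disjoint_left.2 fun he he' ↦ ?_⟩
  obtain ⟨a, -, rfl⟩ := Multiset.mem_map.1 he
  obtain ⟨b, hb, hba⟩ := Multiset.mem_map.1 he'
  exact hv ((Prod.mk.inj hba).1 ▸ hb)

lemma map_swap_starArcs {V : Type*} (v : V) (L : Multiset V) :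
    (starArcs v L).map Prod.swap = starArcs v L := by
  simp only [starArcs, Multiset.map_add, Multiset.map_map, Function.comp_def, Prod.swap_prod_mk,
    add_comm]

lemma triple_le_of_mem {α : Type*} {s : Multiset α} {a b c : α} (ha : a ∈ s) (hb : b ∈ s)
    (hc : c ∈ s) (hab : a ≠ b) (hca : c ≠ a) (hcb : c ≠ b) : {a, b, c} ≤ s :=
  (Multiset.le_iff_subset (by simp [hab, hca.symm, hcb.symm])).2 (by
    simp [Multiset.cons_subset, ha, hb, hc])

namespace IsPathCover

variable {V W : Type*} {S : Multiset V} {E : Multiset (V × V)} {M : Multiset (List V)}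

lemma exists_head?_eq (h : IsPathCover S E M) {a : V} (ha : a ∈ S) :
    ∃ p ∈ M, p.head? = some a :=
  Multiset.mem_map.1 (h.starts ▸ Multiset.mem_map_of_mem some ha)

lemma exists_getLast?_eq (h : IsPathCover S E M) {a : V} (ha : a ∈ S) :
    ∃ p ∈ M, p.getLast? = some a :=
  Multiset.mem_map.1 (h.ends ▸ Multiset.mem_map_of_mem some ha)

lemma exists_mem_pathArcs (h : IsPathCover S E M) {e : V × V} (he : e ∈ E) :
    ∃ p ∈ M, e ∈ pathArcs p :=
  Multiset.mem_bind.1 (h.arcs ▸ he : e ∈ (M.map pathArcs).sum)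

lemma map {f : V → W} (hf : f.Injective) (h : IsPathCover S E M) :
    IsPathCover (S.map f) (E.map (Prod.map f f)) (M.map (List.map f)) where
  nodup := by
    intro p hp
    obtain ⟨q, hq, rfl⟩ := Multiset.mem_map.1 hp
    exact (h.nodup q hq).map hf
  starts := by
    simpa [Multiset.map_map, Function.comp_def] using
      congrArg (Multiset.map (Option.map f)) h.starts
  ends := by
    simpa [Multiset.map_map, Function.comp_def] using
      congrArg (Multiset.map (Option.map f)) h.ends
  arcs := by
    rw [← h.arcs, Multiset.map_map]
    simp only [Function.comp_def, pathArcs_map]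
    exact (Multiset.map_bind M pathArcs (Prod.map f f)).symm

lemma reverse (h : IsPathCover S E M) :
    IsPathCover S (E.map Prod.swap) (M.map List.reverse) where
  nodup := by
    intro p hp
    obtain ⟨q, hq, rfl⟩ := Multiset.mem_map.1 hp
    exact List.nodup_reverse.2 (h.nodup q hq)
  starts := by
    simpa only [Multiset.map_map, Function.comp_def, List.head?_reverse] using h.ends
  ends := by
    simpa only [Multiset.map_map, Function.comp_def, List.getLast?_reverse] using h.starts
  arcs := by
    rw [← h.arcs, Multiset.map_map]
    simp only [Function.comp_def, pathArcs_reverse]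
    exact (Multiset.map_bind M pathArcs Prod.swap).symm

lemma exists_exchange {T : Multiset V} {D D' : Multiset (V × V)} {O N : Multiset (List V)}
    (h : IsPathCover S (D + E) M) (hO : O ≤ M) (hN : ∀ p ∈ N, p.Nodup)
    (hstarts : N.map List.head? = T.map some + O.map List.head?)
    (hends : N.map List.getLast? = T.map some + O.map List.getLast?)
    (harcs : (N.map pathArcs).sum + D = (O.map pathArcs).sum + D') :
    ∃ M', IsPathCover (T + S) (D' + E) M' := by
  obtain ⟨R, rfl⟩ := Multiset.le_iff_exists_add.1 hO
  refine ⟨N + R, ?_, ?_, ?_, ?_⟩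
  · intro p hp
    exact (Multiset.mem_add.1 hp).elim (hN p) fun hpR ↦
      h.nodup p (Multiset.mem_add.2 (Or.inr hpR))
  · rw [Multiset.map_add, hstarts, Multiset.map_add, ← h.starts, Multiset.map_add, add_assoc]
  · rw [Multiset.map_add, hends, Multiset.map_add, ← h.ends, Multiset.map_add, add_assoc]
  · have hsum := h.arcs
    rw [Multiset.map_add, Multiset.sum_add] at hsum ⊢
    refine add_left_cancel (a := D) ?_
    calc D + ((N.map pathArcs).sum + (R.map pathArcs).sum)
        = (N.map pathArcs).sum + D + (R.map pathArcs).sum := by abel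
      _ = D' + ((O.map pathArcs).sum + (R.map pathArcs).sum) := by rw [harcs]; abel
      _ = D + (D' + E) := by rw [hsum]; abel

section Star

variable {v x y z : V} {p₁ p₂ q u : List V}

lemma exists_star_of_getLast? (h : IsPathCover S ({(x, z), (z, x)} + E) M) (hv : ∀ p ∈ M, v ∉ p)
    (hp₁ : p₁ ∈ M) (hxz : (x, z) ∈ pathArcs p₁) (hp₂ : p₂ ∈ M) (hzx : (z, x) ∈ pathArcs p₂)
    (hq : q ∈ M) (hqy : q.getLast? = some y) (hq₁ : q ≠ p₁) (hq₂ : q ≠ p₂) :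
    ∃ M', IsPathCover ({v} + S) (starArcs v {x, y, z} + E) M' := by
  have hp₁₂ : p₁ ≠ p₂ := fun heq ↦ swap_notMem_pathArcs (h.nodup p₁ hp₁) hxz (heq ▸ hzx)
  have hyq : y ∈ q := List.mem_of_getLast? hqy
  obtain ⟨p₁', hnd₁, hstart₁, hend₁, harcs₁⟩ :=
    exists_subdivision (h.nodup p₁ hp₁) (hv p₁ hp₁) hxz
  obtain ⟨p₂', hnd₂, hstart₂, hend₂, harcs₂⟩ :=
    exists_subdivision (h.nodup p₂ hp₂) (hv p₂ hp₂) hzx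
  refine h.exists_exchange (O := {p₁, p₂, q}) (N := {p₁', p₂', q ++ [v], [v, y]})
    (triple_le_of_mem hp₁ hp₂ hq hp₁₂ hq₁ hq₂) ?_ ?_ ?_ ?_
  · have hndq : (q ++ [v]).Nodup := by
      simpa using (h.nodup q hq).concat (hv q hq)
    have hvy : v ≠ y := fun hvy ↦ hv q hq (hvy ▸ hyq)
    simp [hnd₁, hnd₂, hndq, hvy]
  · simp only [Multiset.insert_eq_cons, ← Multiset.singleton_add, Multiset.map_add,
      Multiset.map_singleton, hstart₁, hstart₂, List.head?_cons,
      List.head?_append_of_ne_nil q (List.ne_nil_of_mem hyq)]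
    abel
  · simp only [Multiset.insert_eq_cons, ← Multiset.singleton_add, Multiset.map_add,
      Multiset.map_singleton, hend₁, hend₂, hqy, List.getLast?_concat, List.getLast?_cons_cons,
      List.getLast?_singleton]
    abel
  · simp only [Multiset.insert_eq_cons, ← Multiset.singleton_add, Multiset.map_add,
      Multiset.map_singleton, Multiset.sum_add, Multiset.sum_singleton, starArcs,
      pathArcs_concat hqy, pathArcs_cons_cons, pathArcs_singleton] at harcs₁ harcs₂ ⊢
    calc _ = (pathArcs p₁' + {(x, z)}) + (pathArcs p₂' + {(z, x)}) + pathArcs q + {(y, v)} +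
          {(v, y)} := by abel
      _ = _ := by rw [harcs₁, harcs₂]; abel

lemma exists_star_of_head? (h : IsPathCover S ({(x, z), (z, x)} + E) M) (hv : ∀ p ∈ M, v ∉ p)
    (hp₁ : p₁ ∈ M) (hxz : (x, z) ∈ pathArcs p₁) (hp₂ : p₂ ∈ M) (hzx : (z, x) ∈ pathArcs p₂)
    (hq : q ∈ M) (hqy : q.head? = some y) (hq₁ : q ≠ p₁) (hq₂ : q ≠ p₂) :
    ∃ M', IsPathCover ({v} + S) (starArcs v {x, y, z} + E) M' := by
  have hrev : IsPathCover S ({(x, z), (z, x)} + E.map Prod.swap) (M.map List.reverse) := by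
    rw [Multiset.pair_comm]
    simpa using h.reverse
  have hvrev : ∀ p ∈ M.map List.reverse, v ∉ p := by simpa using hv
  have mem_reverse {p : List V} {e : V × V} (he : e ∈ pathArcs p) :
      e.swap ∈ pathArcs p.reverse := pathArcs_reverse p ▸ Multiset.mem_map_of_mem _ he
  obtain ⟨M', hM'⟩ := hrev.exists_star_of_getLast? hvrev
    (Multiset.mem_map_of_mem _ hp₂) (mem_reverse hzx)
    (Multiset.mem_map_of_mem _ hp₁) (mem_reverse hxz)
    (Multiset.mem_map_of_mem _ hq) (List.getLast?_reverse.trans hqy)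
    (List.reverse_injective.ne hq₂) (List.reverse_injective.ne hq₁)
  refine ⟨M'.map List.reverse, ?_⟩
  simpa [map_swap_starArcs, Multiset.map_map] using hM'.reverse

lemma exists_star_of_split (h : IsPathCover S ({(x, z), (z, x)} + E) M) (hv : ∀ p ∈ M, v ∉ p)
    (hp₁ : p₁ ∈ M) (hxz : (x, z) ∈ pathArcs p₁) (hp₂ : p₂ ∈ M) (hzx : (z, x) ∈ pathArcs p₂)
    (hp₁y : p₁.getLast? = some y) (hu : u ∈ M) (huz : u.head? = some z) (hu₂ : u ≠ p₂) :
    ∃ M', IsPathCover ({v} + S) (starArcs v {x, y, z} + E) M' := by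
  have hp₁₂ : p₁ ≠ p₂ := fun heq ↦ swap_notMem_pathArcs (h.nodup p₁ hp₁) hxz (heq ▸ hzx)
  obtain ⟨p₂', hnd₂, hstart₂, hend₂, harcs₂⟩ :=
    exists_subdivision (h.nodup p₂ hp₂) (hv p₂ hp₂) hzx
  obtain ⟨s, t, hnds, hndt, hs_start, hs_end, ht_start, ht_end, harcs₁⟩ :=
    exists_split (h.nodup p₁ hp₁) (hv p₁ hp₁) hxz hp₁y
  have hu₁ : u ≠ p₁ := fun heq ↦ head?_ne_of_mem_pathArcs (h.nodup p₁ hp₁) hxz (heq ▸ huz)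
  refine h.exists_exchange (O := {p₁, p₂, u}) (N := {s, t, p₂', v :: u})
    (triple_le_of_mem hp₁ hp₂ hu hp₁₂ hu₁ hu₂) ?_ ?_ ?_ ?_
  · simp [hnds, hndt, hnd₂, h.nodup u hu, hv u hu]
  · simp only [Multiset.insert_eq_cons, ← Multiset.singleton_add, Multiset.map_add,
      Multiset.map_singleton, hstart₂, hs_start, ht_start, huz, List.head?_cons]
    abel
  · have hvu : (v :: u).getLast? = u.getLast? :=
      List.getLast?_append_of_ne_nil [v] (List.ne_nil_of_mem (List.mem_of_head? huz))
    simp only [Multiset.insert_eq_cons, ← Multiset.singleton_add, Multiset.map_add,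
      Multiset.map_singleton, hend₂, hp₁y, hs_end, ht_end, hvu]
    abel
  · simp only [Multiset.insert_eq_cons, ← Multiset.singleton_add, Multiset.map_add,
      Multiset.map_singleton, Multiset.sum_add, Multiset.sum_singleton, starArcs,
      pathArcs_cons huz] at harcs₁ harcs₂ ⊢
    calc _ = (pathArcs s + pathArcs t + {(x, z)}) + (pathArcs p₂' + {(z, x)}) + {(v, z)} +
          pathArcs u := by abel
      _ = _ := by rw [harcs₁, harcs₂]; abel

lemma exists_star_of_getLast?_eq (hyz : y ≠ z) (hy : y ∈ S) (hz : z ∈ S)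
    (h : IsPathCover S ({(x, z), (z, x)} + E) M) (hv : ∀ p ∈ M, v ∉ p)
    (hp₁ : p₁ ∈ M) (hxz : (x, z) ∈ pathArcs p₁) (hp₂ : p₂ ∈ M) (hzx : (z, x) ∈ pathArcs p₂)
    (hp₁y : p₁.getLast? = some y) :
    ∃ M', IsPathCover ({v} + S) (starArcs v {x, y, z} + E) M' := by
  obtain ⟨u, hu, huz⟩ := h.exists_head?_eq hz
  by_cases hu₂ : u = p₂
  · subst hu₂
    obtain ⟨q, hq, hqy⟩ := h.exists_head?_eq hy
    have hq₁ : q ≠ p₁ := by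
      rintro rfl
      exact head?_ne_getLast?_of_mem_pathArcs (h.nodup q hq) hxz (hqy.trans hp₁y.symm)
    have hq₂ : q ≠ u := by
      rintro rfl
      exact hyz (Option.some_injective _ (hqy.symm.trans huz))
    exact h.exists_star_of_head? hv hp₁ hxz hp₂ hzx hq hqy hq₁ hq₂
  · exact h.exists_star_of_split hv hp₁ hxz hp₂ hzx hp₁y hu huz hu₂

theorem exists_star (hxy : x ≠ y) (hyz : y ≠ z) (hx : x ∈ S) (hy : y ∈ S) (hz : z ∈ S)
    (h : IsPathCover S ({(x, z), (z, x)} + E) M) (hv : ∀ p ∈ M, v ∉ p) :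
    ∃ M', IsPathCover ({v} + S) (starArcs v {x, y, z} + E) M' := by
  obtain ⟨p₁, hp₁, hxz⟩ := h.exists_mem_pathArcs (e := (x, z)) (by simp)
  obtain ⟨p₂, hp₂, hzx⟩ := h.exists_mem_pathArcs (e := (z, x)) (by simp)
  obtain ⟨q, hq, hqy⟩ := h.exists_getLast?_eq hy
  by_cases hq₁ : q = p₁
  · exact exists_star_of_getLast?_eq hyz hy hz h hv hp₁ hxz hp₂ hzx (hq₁ ▸ hqy)
  by_cases hq₂ : q = p₂
  · have hleaves : ({x, y, z} : Multiset V) = {z, y, x} := by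
      simp only [Multiset.insert_eq_cons, ← Multiset.singleton_add]
      abel
    rw [Multiset.pair_comm] at h
    rw [hleaves]
    exact exists_star_of_getLast?_eq hxy.symm hy hx h hv hp₂ hzx hp₁ hxz (hq₂ ▸ hqy)
  exact h.exists_star_of_getLast? hv hp₁ hxz hp₂ hzx hq hqy hq₁ hq₂

end Star

end IsPathCover

section Conversion

variable {V : Type*} [Fintype V]

lemma sum_eq_val_iff {ι α : Type*} [Fintype ι] {F : ι → Multiset α} (hF : ∀ i, (F i).Nodup)
    {E : Finset α} :
    ∑ i, F i = E.val ↔ (∀ i, ∀ a ∈ F i, a ∈ E) ∧ ∀ a ∈ E, ∃! i, a ∈ F i := by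
  classical
  have hcount (a : α) : (∑ i, F i).count a = Finset.card {i | a ∈ F i} := by
    simp only [Multiset.count_sum', Multiset.count_eq_of_nodup (hF _), Finset.card_filter]
  have hcount_val (a : α) : E.val.count a = if a ∈ E then 1 else 0 :=
    Multiset.count_eq_of_nodup E.nodup
  simp only [Multiset.ext, hcount, hcount_val]
  constructor
  · refine fun h ↦ ⟨fun i a hai ↦ ?_, fun a haE ↦ ?_⟩
    · by_contra haE
      have hempty := Finset.card_eq_zero.1 ((h a).trans (if_neg haE))
      exact Finset.filter_eq_empty_iff.1 hempty (Finset.mem_univ i) hai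
    · exact (Fintype.existsUnique_iff_card_one _).2 ((h a).trans (if_pos haE))
  · rintro ⟨hsub, huniq⟩ a
    split_ifs with haE
    · exact (Fintype.existsUnique_iff_card_one _).1 (huniq a haE)
    · exact Finset.card_eq_zero.2 (Finset.filter_eq_empty_iff.2 fun i _ hai ↦ haE (hsub i a hai))

lemma map_getLast?_eq_iff {P : V → List V} (hP : ∀ w, P w ≠ []) :
    Finset.univ.val.map (fun w ↦ (P w).getLast?) = Finset.univ.val.map some ↔
      ∀ w, ∃! u, (P u).getLast? = some w := by
  have hlast (w : V) : (P w).getLast? = some ((P w).getLast (hP w)) :=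
    List.getLast?_eq_some_getLast (hP w)
  simp only [hlast, Option.some.injEq]
  rw [← Function.bijective_iff_existsUnique, Multiset.bijective_iff_map_univ_eq_univ,
    ← (Multiset.map_injective (Option.some_injective V)).eq_iff, Multiset.map_map]
  rfl

open Classical in
/-- The arcs of the symmetric orientation of `G`. -/
noncomputable def symmArcs (G : SimpleGraph V) : Finset (V × V) := {e | G.Adj e.1 e.2}

lemma mem_symmArcs {G : SimpleGraph V} {e : V × V} : e ∈ symmArcs G ↔ G.Adj e.1 e.2 := by
  simp [symmArcs]

lemma isPathCover_map_univ_iff {G : SimpleGraph V} {P : V → List V}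
    (hP : ∀ w, (P w).head? = some w) :
    IsPathCover Finset.univ.val (symmArcs G).val (Finset.univ.val.map P) ↔
      (∀ w, (P w).Nodup ∧ (P w).IsChain G.Adj) ∧ (∀ w, ∃! u, (P u).getLast? = some w) ∧
        ∀ a b, G.Adj a b → ∃! w, (a, b) ∈ pathArcs (P w) := by
  have hne (w : V) : P w ≠ [] := fun h0 ↦ by simpa [h0] using hP w
  have hsum : ((Finset.univ.val.map P).map pathArcs).sum = ∑ w, pathArcs (P w) := by
    rw [Multiset.map_map]; rfl
  have harcs (hnd : ∀ w, (P w).Nodup) : ∑ w, pathArcs (P w) = (symmArcs G).val ↔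
      (∀ w, (P w).IsChain G.Adj) ∧ ∀ a b, G.Adj a b → ∃! w, (a, b) ∈ pathArcs (P w) := by
    simp only [sum_eq_val_iff fun w ↦ nodup_pathArcs (hnd w), mem_symmArcs, Prod.forall,
      isChain_iff_forall_mem_pathArcs]
  constructor
  · rintro ⟨hnd, -, hends, hE⟩
    replace hnd (w : V) : (P w).Nodup := hnd _ (Multiset.mem_map_of_mem P (Finset.mem_univ_val w))
    rw [Multiset.map_map] at hends
    obtain ⟨hchain, huniq⟩ := (harcs hnd).1 (hsum ▸ hE)
    exact ⟨fun w ↦ ⟨hnd w, hchain w⟩, (map_getLast?_eq_iff hne).1 hends, huniq⟩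
  · rintro ⟨hpath, hends, huniq⟩
    refine ⟨by simpa using fun w ↦ (hpath w).1, ?_, ?_, ?_⟩
    · rw [Multiset.map_map]
      exact Multiset.map_congr rfl fun w _ ↦ hP w
    · rw [Multiset.map_map]
      exact (map_getLast?_eq_iff hne).2 hends
    · rw [hsum]
      exact (harcs fun w ↦ (hpath w).1).2 ⟨fun w ↦ (hpath w).2, huniq⟩

lemma IsPathCover.exists_eq_map_univ {E : Multiset (V × V)} {M : Multiset (List V)}
    (h : IsPathCover Finset.univ.val E M) :
    ∃ P : V → List V, M = Finset.univ.val.map P ∧ ∀ w, (P w).head? = some w := by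
  choose P hPM hP using fun w ↦ h.exists_head?_eq (Finset.mem_univ_val w)
  have hinj : P.Injective := fun a b hab ↦ Option.some_injective _ (by rw [← hP, hab, hP])
  have hle : Finset.univ.val.map P ≤ M :=
    (Multiset.le_iff_subset (Finset.univ.nodup.map hinj)).2 (by simpa [Multiset.subset_iff])
  have hcard : M.card = (Finset.univ : Finset V).val.card := by
    simpa using congrArg Multiset.card h.starts
  exact ⟨P, (Multiset.eq_of_le_of_card_le hle (by rw [hcard, Multiset.card_map])).symm, hP⟩

theorem hasOPPDC_iff_exists_isPathCover {G : SimpleGraph V} :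
    HasOPPDC G ↔ ∃ M, IsPathCover Finset.univ.val (symmArcs G).val M := by
  constructor
  · rintro ⟨P, hpath, hends, huniq⟩
    exact ⟨_, (isPathCover_map_univ_iff fun w ↦ (hpath w).2.2.2).2
      ⟨fun w ↦ ⟨(hpath w).2.1, (hpath w).2.2.1⟩, hends, huniq⟩⟩
  · rintro ⟨M, hM⟩
    obtain ⟨P, rfl, hP⟩ := hM.exists_eq_map_univ
    obtain ⟨hpath, hends, huniq⟩ := (isPathCover_map_univ_iff hP).1 hM
    exact ⟨P, fun w ↦ ⟨fun h0 ↦ by simpa [h0] using hP w, (hpath w).1, (hpath w).2, hP w⟩,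
      hends, huniq⟩

lemma symmArcs_sup_fromEdgeSet {G : SimpleGraph V} {x z : V} (hne : x ≠ z)
    (hxz : ¬ G.Adj x z) :
    (symmArcs (G ⊔ SimpleGraph.fromEdgeSet {s(x, z)})).val =
      {(x, z), (z, x)} + (symmArcs G).val := by
  refine (Multiset.Nodup.ext (Finset.nodup _) ?_).2 fun ⟨a, b⟩ ↦ ?_
  · rw [Multiset.nodup_add, Multiset.disjoint_left]
    refine ⟨by simp [hne], Finset.nodup _, ?_⟩
    simp [mem_symmArcs, hxz, G.adj_comm z x]
  · simp only [Finset.mem_val, mem_symmArcs, SimpleGraph.sup_adj, SimpleGraph.fromEdgeSet_adj,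
      Set.mem_singleton_iff, Sym2.eq_iff, Multiset.mem_add, Multiset.insert_eq_cons,
      Multiset.mem_cons, Multiset.mem_singleton, Prod.mk.injEq]
    grind

lemma univ_val_eq_singleton_add (v : V) [Fintype {w : V | w ≠ v}] :
    (Finset.univ : Finset V).val =
      {v} + (Finset.univ : Finset {w : V | w ≠ v}).val.map Subtype.val := by
  refine (Multiset.Nodup.ext Finset.univ.nodup ?_).2 fun w ↦ ?_
  · rw [Multiset.singleton_add, Multiset.nodup_cons]
    exact ⟨by simp, Finset.univ.nodup.map Subtype.val_injective⟩
  · by_cases hw : w = v <;> simp [hw]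

lemma symmArcs_eq_starArcs_add (G : SimpleGraph V) (v : V) [Fintype (G.neighborSet v)]
    [Fintype {w : V | w ≠ v}] :
    (symmArcs G).val = starArcs v (G.neighborFinset v).val +
      (symmArcs (G.induce {w : V | w ≠ v})).val.map (Prod.map Subtype.val Subtype.val) := by
  have mem_induce {a b : V} :
      (a, b) ∈ (symmArcs (G.induce {w : V | w ≠ v})).val.map (Prod.map Subtype.val Subtype.val) ↔
        a ≠ v ∧ b ≠ v ∧ G.Adj a b := by
    simp only [Multiset.mem_map, Finset.mem_val, mem_symmArcs, Prod.exists, Prod.map_apply,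
      SimpleGraph.comap_adj, Function.Embedding.subtype_apply, Subtype.exists, Prod.mk.injEq]
    grind
  refine (Multiset.Nodup.ext (Finset.nodup _) ?_).2 fun ⟨a, b⟩ ↦ ?_
  · refine Multiset.nodup_add.2 ⟨nodup_starArcs (Finset.nodup _) (by simp), (Finset.nodup _).map
      (Subtype.val_injective.prodMap Subtype.val_injective), ?_⟩
    rw [Multiset.disjoint_left]
    rintro ⟨a, b⟩ hstar hind
    obtain ⟨ha, hb, -⟩ := mem_induce.1 hind
    exact (mem_starArcs.1 hstar).elim (fun h ↦ ha h.1) (fun h ↦ hb h.1)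
  · rw [Multiset.mem_add, mem_starArcs, mem_induce]
    simp only [Finset.mem_val, mem_symmArcs, SimpleGraph.mem_neighborFinset]
    by_cases ha : a = v <;> by_cases hb : b = v <;> simp [ha, hb, G.adj_comm v]

end Conversion

/-- if `v` has neighborhood `{x, y, z}` with `xz ∉ E(G)` and
`(G \ v) ∪ {xz}` has an OPPDC, then `G` has an OPPDC. -/
theorem deleteVertex_deg_three_addEdge {V : Type*} [Fintype V] (G : SimpleGraph V)
    (v x y z : V)
    (hN : G.neighborSet v = {x, y, z})
    (hxy : x ≠ y) (hyz : y ≠ z) (hxzne : x ≠ z)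
    (hxv : x ≠ v) (hzv : z ≠ v)
    (hxz : ¬ G.Adj x z)
    (h : HasOPPDC ((G.induce {w : V | w ≠ v}) ⊔
      SimpleGraph.fromEdgeSet {s((⟨x, hxv⟩ : {w : V | w ≠ v}), (⟨z, hzv⟩ : {w : V | w ≠ v}))})) :
    HasOPPDC G := by
  classical
  have hyN : y ∈ G.neighborSet v := by simp [hN]
  have hyv : y ≠ v := SimpleGraph.Adj.ne' hyN
  have hleaves : (G.neighborFinset v).val = {x, y, z} :=
    (Multiset.Nodup.ext (Finset.nodup _) (by simp [hxy, hyz, hxzne])).2 fun w ↦ by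
      rw [Finset.mem_val, SimpleGraph.mem_neighborFinset, ← SimpleGraph.mem_neighborSet, hN]
      simp
  obtain ⟨M, hM⟩ := hasOPPDC_iff_exists_isPathCover.1 h
  rw [symmArcs_sup_fromEdgeSet (by simpa using hxzne) (by simpa using hxz)] at hM
  have hMV := hM.map Subtype.val_injective
  rw [Multiset.map_add, Multiset.insert_eq_cons, Multiset.map_cons, Multiset.map_singleton] at hMV
  obtain ⟨M', hM'⟩ := hMV.exists_star (v := v) hxy hyz (by simpa) (by simpa) (by simpa) (by simp)
  refine hasOPPDC_iff_exists_isPathCover.2 ⟨M', ?_⟩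
  rwa [univ_val_eq_singleton_add v, symmArcs_eq_starArcs_add G v, hleaves]
end

section
/- If G is a minimal counterexample (with respect to the number of vertices) to the statement 'every connected graph other than K₃ and K₅ has an OPPDC', then G is 3-edge-connected. -/
/-!
Join a new vertex `∞` to all vertices of `G`. Closing up its paths through `∞`, an OPPDC of `G`
becomes a decomposition of the arcs of this cone into circuits through `∞`. If at most two edges
separate `G`, a minimum edge cut `S` has at most two edges as well, and both of its sides induce
connected graphs. By minimality the two sides have covers; open those at the ends of the cut edges
and let paths on either side of a cut edge swap their ends along it. When the two cut edges have
distinct ends `u`, `v` on a side, the opened cover is obtained by deleting a new vertex joined to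
`u` and `v` from a cover of the enlarged side. This vertex makes the side no longer smaller than
`G` if the other side is a single vertex; then `G` arises from a smaller graph `H` by adding a
vertex of degree two, and its cover comes from one of `H` or of `H` with the edge `u v` added. The
exceptional graphs `K₃` and `K₅` are treated by explicit covers.
-/

open SimpleGraph

variable {V W : Type*}

section Arcs

/-- The arcs of the directed walk that leaves `a`, visits the vertices of `p` in order and ends
in `b`. -/
def arcs (a : V) (p : List V) (b : V) : Multiset (V × V) :=
  (a :: p).zip (p ++ [b])

/-- The circuit through the point `∞ = none` that closes up the path `p`. -/
def circuit (p : List V) : Multiset (Option V × Option V) :=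
  arcs none (p.map some) none

@[simp] lemma arcs_nil (a b : V) : arcs a [] b = {(a, b)} := rfl

@[simp] lemma arcs_cons (a c : V) (p : List V) (b : V) :
    arcs a (c :: p) b = {(a, c)} + arcs c p b := rfl

@[simp] lemma arcs_append_cons (a c b : V) (p q : List V) :
    arcs a (p ++ c :: q) b = arcs a p c + arcs c q b := by
  induction p generalizing a with
  | nil => rfl
  | cons d p ih => simp only [List.cons_append, arcs_cons, ih, add_assoc]

lemma mem_zip_tail_iff {p : List V} {a b : V} :
    (a, b) ∈ p.zip p.tail ↔ ∃ x y, p = x ++ a :: b :: y := by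
  constructor
  · intro h
    induction p with
    | nil => simp at h
    | cons c p ih =>
      cases p with
      | nil => simp at h
      | cons d p =>
        rcases List.mem_cons.1 h with h | h
        · obtain ⟨rfl, rfl⟩ := Prod.mk.inj h
          exact ⟨[], p, rfl⟩
        · obtain ⟨x, y, hxy⟩ := ih h
          exact ⟨c :: x, y, by rw [hxy, List.cons_append]⟩
  · rintro ⟨x, y, rfl⟩
    induction x with
    | nil => simp
    | cons c x ih => cases x <;> simp_all

lemma isChain_iff_forall_mem_zip_tail {R : V → V → Prop} {p : List V} :
    p.IsChain R ↔ ∀ a b, (a, b) ∈ p.zip p.tail → R a b := by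
  simp only [mem_zip_tail_iff, List.isChain_iff_forall_rel_of_append_cons_cons]
  exact ⟨fun h a b ⟨x, y, hp⟩ => h hp, fun h a b x y hp => h a b ⟨x, y, hp⟩⟩

lemma arcs_map (f : V → W) (a : V) (p : List V) (b : V) :
    arcs (f a) (p.map f) (f b) = (arcs a p b).map (Prod.map f f) := by
  induction p generalizing a with
  | nil => rfl
  | cons c p ih => simp [ih]

lemma arcs_reverse (a : V) (p : List V) (b : V) :
    arcs b p.reverse a = (arcs a p b).map Prod.swap := by
  induction p generalizing a with
  | nil => rfl
  | cons c p ih => simp [ih, add_comm]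

lemma map_snd_arcs (a : V) (p : List V) (b : V) :
    (arcs a p b).map Prod.snd = ↑(p ++ [b]) := by
  simp [arcs, List.map_snd_zip]

lemma circuit_map (f : V → W) (p : List V) :
    circuit (p.map f) = (circuit p).map (Prod.map (Option.map f) (Option.map f)) := by
  simp only [circuit, ← arcs_map, List.map_map, Option.map_none]
  rfl

lemma circuit_reverse (p : List V) : circuit p.reverse = (circuit p).map Prod.swap := by
  simp only [circuit, List.map_reverse, arcs_reverse]

lemma nodup_circuit {p : List V} (hp : p.Nodup) : (circuit p).Nodup := by
  refine Multiset.Nodup.of_map Prod.snd ?_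
  rw [circuit, map_snd_arcs, Multiset.coe_nodup, List.nodup_append]
  simp [hp.map (Option.some_injective V)]

@[simp] lemma none_none_mem_circuit {p : List V} : (none, none) ∈ circuit p ↔ p = [] := by
  have mem_tail (a : V) (q : List V) : (none, none) ∉ arcs (some a) (q.map some) none := by
    induction q generalizing a <;> simp_all
  cases p <;> simp [circuit, mem_tail]

@[simp] lemma none_some_mem_circuit {p : List V} {b : V} :
    (none, some b) ∈ circuit p ↔ p.head? = some b := by
  have mem_tail (a : V) (q : List V) : (none, some b) ∉ arcs (some a) (q.map some) none := by
    induction q generalizing a <;> simp_all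
  cases p <;> simp [circuit, mem_tail, eq_comm]

@[simp] lemma some_none_mem_circuit {p : List V} {a : V} :
    (some a, none) ∈ circuit p ↔ p.getLast? = some a := by
  rw [← p.reverse_reverse, List.getLast?_reverse, ← none_some_mem_circuit, circuit_reverse]
  simp

@[simp] lemma some_some_mem_circuit {p : List V} {a b : V} :
    (some a, some b) ∈ circuit p ↔ (a, b) ∈ p.zip p.tail := by
  have mem_tail (c : V) (q : List V) :
      (some a, some b) ∈ arcs (some c) (q.map some) none ↔ (a, b) ∈ (c :: q).zip q := by
    induction q generalizing c <;> simp_all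
  cases p <;> simp [circuit, mem_tail]

end Arcs

section Graphs

/-- The arcs of the symmetric orientation of `G`, as a multiset without repetitions. -/
noncomputable def graphArcs [Finite V] (G : SimpleGraph V) : Multiset (V × V) :=
  (Set.toFinite {e : V × V | G.Adj e.1 e.2}).toFinset.val

/-- The graph obtained from `G` by adding a new vertex `none` with neighbourhood `N`. -/
def withVertex (G : SimpleGraph V) (N : Set V) : SimpleGraph (Option V) where
  Adj
    | none, none => False
    | none, some b => b ∈ N
    | some a, none => a ∈ N
    | some a, some b => G.Adj a b
  symm := ⟨by rintro (_ | a) (_ | b) h; exacts [h, h, h, h.symm]⟩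
  loopless := ⟨by rintro (_ | a) h; exacts [h, h.ne rfl]⟩

/-- The cone over `G`, whose apex `∞ = none` is joined to all vertices. -/
abbrev cone (G : SimpleGraph V) : SimpleGraph (Option V) := withVertex G Set.univ

section
variable (G : SimpleGraph V) {N : Set V} {a b : V}

@[simp] lemma withVertex_none_some : (withVertex G N).Adj none (some b) ↔ b ∈ N := Iff.rfl

@[simp] lemma withVertex_some_none : (withVertex G N).Adj (some a) none ↔ a ∈ N := Iff.rfl

@[simp] lemma withVertex_some_some :
    (withVertex G N).Adj (some a) (some b) ↔ G.Adj a b := Iff.rfl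

end

@[simp] lemma mem_graphArcs [Finite V] {G : SimpleGraph V} {a b : V} :
    (a, b) ∈ graphArcs G ↔ G.Adj a b := by
  simp [graphArcs]

lemma nodup_graphArcs [Finite V] (G : SimpleGraph V) : (graphArcs G).Nodup :=
  Finset.nodup _

lemma eq_graphArcs_iff [Finite V] {G : SimpleGraph V} {s : Multiset (V × V)} (hs : s.Nodup) :
    s = graphArcs G ↔ ∀ a b, (a, b) ∈ s ↔ G.Adj a b := by
  simp [Multiset.Nodup.ext hs (nodup_graphArcs G)]

lemma graphArcs_map_iso [Finite V] [Finite W] {G : SimpleGraph V} {H : SimpleGraph W}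
    (e : G ≃g H) : (graphArcs G).map (Prod.map e e) = graphArcs H := by
  have hinj := e.injective.prodMap e.injective
  refine (eq_graphArcs_iff ((nodup_graphArcs G).map hinj)).2 fun a b => ?_
  rw [← e.apply_symm_apply a, ← e.apply_symm_apply b, ← Prod.map_apply,
    Multiset.mem_map_of_injective hinj, mem_graphArcs, e.map_adj_iff]

/-- The extension of an isomorphism to the graphs obtained by adding a vertex. -/
def withVertexIso {G : SimpleGraph V} {H : SimpleGraph W} {N : Set V} {N' : Set W} (e : G ≃g H)
    (hN : ∀ a, e a ∈ N' ↔ a ∈ N) : withVertex G N ≃g withVertex H N' where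
  toEquiv := e.toEquiv.optionCongr
  map_rel_iff' := by rintro (_ | a) (_ | b) <;> simp [e.map_adj_iff, hN]

/-- The extension of an isomorphism to the cones. -/
abbrev coneIso {G : SimpleGraph V} {H : SimpleGraph W} (e : G ≃g H) : cone G ≃g cone H :=
  withVertexIso e fun _ => Iff.rfl

lemma graphArcs_map_swap [Finite V] (G : SimpleGraph V) :
    (graphArcs G).map Prod.swap = graphArcs G := by
  refine (eq_graphArcs_iff ((nodup_graphArcs G).map Prod.swap_injective)).2 ?_
  simp [G.adj_comm]

/-- A multiset of arcs of the cone over a graph of the form `withVertex G N`: copies of the arcs in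
`A` of the cone over `G`, an arc from every element of `B` to the new vertex `some none`, an arc
from the new vertex to every element of `C`, and `m` arcs from the apex to the new vertex and `n`
arcs back. -/
def extendArcs (A : Multiset (Option V × Option V)) (B C : Multiset V) (m n : ℕ) :
    Multiset (Option (Option V) × Option (Option V)) :=
  A.map (Prod.map (Option.map some) (Option.map some)) +
    (B.map (fun b => (some (some b), some none)) + C.map (fun c => (some none, some (some c))) +
      (m • {(none, some none)} + n • {(some none, none)}))

lemma extendArcs_add (A A' : Multiset (Option V × Option V)) (B B' C C' : Multiset V)
    (m m' n n' : ℕ) :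
    extendArcs (A + A') (B + B') (C + C') (m + m') (n + n') =
      extendArcs A B C m n + extendArcs A' B' C' m' n' := by
  simp only [extendArcs, Multiset.map_add, add_smul]
  abel

lemma injective_map_map_some : Function.Injective
    (Prod.map (Option.map (some : V → Option V)) (Option.map (some : V → Option V))) :=
  (Option.map_injective (Option.some_injective V)).prodMap
    (Option.map_injective (Option.some_injective V))

lemma eq_of_extendArcs_eq {A A' : Multiset (Option V × Option V)} {B B' C C' : Multiset V}
    {m m' n n' : ℕ} (h : extendArcs A B C m n = extendArcs A' B' C' m' n') :
    A = A' ∧ B = B' ∧ C = C' := by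
  classical
  have count_eq (e) := congrArg (Multiset.count e) h
  simp only [extendArcs, Multiset.count_add, Multiset.count_nsmul] at count_eq
  refine ⟨Multiset.ext.2 fun e => ?_, Multiset.ext.2 fun b => ?_, Multiset.ext.2 fun c => ?_⟩
  · have := count_eq (Prod.map (Option.map some) (Option.map some) e)
    simp only [Multiset.count_map_eq_count' _ _ injective_map_map_some] at this
    rcases e with ⟨_ | a, _ | b⟩ <;> simpa using this
  · have hinj : Function.Injective fun b : V => (some (some b), some (none : Option V)) :=
      fun a b => by simp
    simpa [Multiset.count_map_eq_count' _ _ hinj] using count_eq (some (some b), some none)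
  · have hinj : Function.Injective fun c : V => (some (none : Option V), some (some c)) :=
      fun a b => by simp
    simpa [Multiset.count_map_eq_count' _ _ hinj] using count_eq (some none, some (some c))

lemma graphArcs_cone_withVertex [Finite V] (G : SimpleGraph V) {v w : V} (hvw : v ≠ w) :
    graphArcs (cone (withVertex G {v, w})) =
      extendArcs (graphArcs (cone G)) {v, w} {v, w} 1 1 := by
  refine ((eq_graphArcs_iff ?_).2 ?_).symm
  · refine Multiset.nodup_add.2 ⟨(nodup_graphArcs _).map injective_map_map_some, ?_, ?_⟩
    · simp [hvw]
    · rw [Multiset.disjoint_left]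
      rintro _ he
      obtain ⟨⟨_ | a, _ | b⟩, -, rfl⟩ := Multiset.mem_map.1 he <;> simp
  · rintro (_ | _ | a) (_ | _ | b) <;> simp [extendArcs, or_comm]

end Graphs

section Covers

variable [Finite V] [Finite W]

/-- A decomposition of the arcs of the cone over `G` into circuits through the apex: the multiset
of paths obtained from these circuits by deleting the apex. -/
structure IsCircuitCover (G : SimpleGraph V) (L : Multiset (List V)) : Prop where
  nodup : ∀ p ∈ L, p.Nodup
  bind_circuit : L.bind circuit = graphArcs (cone G)

namespace IsCircuitCover

variable {G : SimpleGraph V} {L : Multiset (List V)}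

lemma exists_mem_circuit_iff (h : IsCircuitCover G L) {a b : Option V} :
    (∃ p ∈ L, (a, b) ∈ circuit p) ↔ (cone G).Adj a b := by
  rw [← Multiset.mem_bind, h.bind_circuit, mem_graphArcs]

lemma eq_of_mem_circuit (h : IsCircuitCover G L) {p q : List V} (hp : p ∈ L) (hq : q ∈ L)
    {e : Option V × Option V} (hep : e ∈ circuit p) (heq : e ∈ circuit q) : p = q := by
  have hdisj := (Multiset.nodup_bind.1 (h.bind_circuit ▸ nodup_graphArcs _)).2
  by_contra hne
  have : Std.Symm (Function.onFun Disjoint (circuit (V := V))) := ⟨fun _ _ h => h.symm⟩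
  exact Multiset.disjoint_left.1 (hdisj.forall hp hq hne) hep heq

lemma ne_nil (h : IsCircuitCover G L) {p : List V} (hp : p ∈ L) : p ≠ [] := by
  intro hnil
  simpa using h.exists_mem_circuit_iff.1 ⟨p, hp, none_none_mem_circuit.2 hnil⟩

lemma isChain (h : IsCircuitCover G L) {p : List V} (hp : p ∈ L) : p.IsChain G.Adj :=
  isChain_iff_forall_mem_zip_tail.2 fun a b hab =>
    h.exists_mem_circuit_iff (a := some a) (b := some b) |>.1
      ⟨p, hp, some_some_mem_circuit.2 hab⟩

lemma hasOPPDC (h : IsCircuitCover G L) : HasOPPDC G := by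
  choose P hPL hPhead using fun v : V =>
    h.exists_mem_circuit_iff (a := none) (b := some v) |>.2 trivial
  simp only [none_some_mem_circuit] at hPhead
  have existsUnique_path {a b : Option V} (hab : (cone G).Adj a b) :
      ∃! v, (a, b) ∈ circuit (P v) := by
    obtain ⟨p, hpL, hp⟩ := h.exists_mem_circuit_iff.2 hab
    obtain ⟨v, hv⟩ := Option.ne_none_iff_exists'.1 (mt List.head?_eq_none_iff.1 (h.ne_nil hpL))
    obtain rfl : p = P v := h.eq_of_mem_circuit hpL (hPL v) (none_some_mem_circuit.2 hv)
      (none_some_mem_circuit.2 (hPhead v))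
    refine ⟨v, hp, fun w hw => ?_⟩
    have hPwv : P w = P v := h.eq_of_mem_circuit (hPL w) (hPL v) hw hp
    simpa [hPhead] using congrArg List.head? hPwv
  refine ⟨P, fun v => ⟨h.ne_nil (hPL v), h.nodup _ (hPL v), h.isChain (hPL v), hPhead v⟩, ?_, ?_⟩
  · intro w
    simpa using existsUnique_path (a := some w) (b := none) trivial
  · intro a b hab
    simpa using existsUnique_path (a := some a) (b := some b) hab

lemma reverse (h : IsCircuitCover G L) : IsCircuitCover G (L.map List.reverse) where
  nodup := by simpa using h.nodup
  bind_circuit := by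
    simp only [Multiset.bind_map, circuit_reverse, ← Multiset.map_bind, h.bind_circuit,
      graphArcs_map_swap]

end IsCircuitCover

lemma HasOPPDC.exists_isCircuitCover {G : SimpleGraph V} (h : HasOPPDC G) :
    ∃ L, IsCircuitCover G L := by
  obtain ⟨P, hP, hend, harc⟩ := h
  choose hne hnodup hchain hhead using hP
  have := Fintype.ofFinite V
  have existsUnique_iff (a b : Option V) :
      ((∃ v, (a, b) ∈ circuit (P v)) ↔ (cone G).Adj a b) ∧
        ∀ v w, (a, b) ∈ circuit (P v) → (a, b) ∈ circuit (P w) → v = w := by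
    rcases a with _ | a <;> rcases b with _ | b
    · simp [hne]
    · simp [hhead]
    · simpa using ⟨(hend a).exists, fun v w => (hend a).unique⟩
    · refine ⟨⟨fun ⟨v, hv⟩ => isChain_iff_forall_mem_zip_tail.1 (hchain v) a b (by simpa using hv),
        fun hab => by simpa using (harc a b hab).exists⟩, fun v w hv hw => ?_⟩
      rw [some_some_mem_circuit] at hv hw
      exact (harc a b (isChain_iff_forall_mem_zip_tail.1 (hchain v) a b hv)).unique hv hw
  refine ⟨Finset.univ.val.map P, by simpa using hnodup, ?_⟩
  rw [Multiset.bind_map, eq_graphArcs_iff]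
  · simpa using fun a b => (existsUnique_iff a b).1
  · refine Multiset.nodup_bind.2 ⟨fun v _ => nodup_circuit (hnodup v), ?_⟩
    refine Finset.univ.nodup.pairwise fun v _ w _ hvw => ?_
    exact Multiset.disjoint_left.2 fun hv hw => hvw ((existsUnique_iff _ _).2 v w hv hw)

lemma hasOPPDC_iff {G : SimpleGraph V} : HasOPPDC G ↔ ∃ L, IsCircuitCover G L :=
  ⟨HasOPPDC.exists_isCircuitCover, fun ⟨_, h⟩ => h.hasOPPDC⟩

lemma HasOPPDC.map_iso {G : SimpleGraph V} {H : SimpleGraph W} (h : HasOPPDC G) (e : G ≃g H) :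
    HasOPPDC H := by
  obtain ⟨L, hL⟩ := hasOPPDC_iff.1 h
  refine hasOPPDC_iff.2 ⟨L.map (List.map e), ?_, ?_⟩
  · simpa [List.nodup_map_iff e.injective] using hL.nodup
  · simp only [Multiset.bind_map, circuit_map, ← Multiset.map_bind, hL.bind_circuit]
    exact graphArcs_map_iso (coneIso e)

omit [Finite V] in
lemma sum_eq_bind {ι : Type*} (s : Finset ι) (f : ι → Multiset V) :
    ∑ i ∈ s, f i = s.val.bind f := rfl

/-- A decomposition of the arcs of the cone over `G` into closed walks through the apex, each of
them a circuit except for one walk for every `i`, which is only required to consist of a path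
from the apex to `u i` followed by a path from `u i` to the apex. These are the walks that can be
rerouted at `u i` along a new edge. -/
def HasOpenCover {ι : Type*} [Fintype ι] (G : SimpleGraph V) (u : ι → V) : Prop :=
  ∃ (p r : ι → List V) (M : Multiset (List V)),
    (∀ i, (p i ++ [u i]).Nodup) ∧ (∀ i, (u i :: r i).Nodup) ∧ (∀ q ∈ M, q.Nodup) ∧
    ∑ i, circuit (p i ++ u i :: r i) + M.bind circuit = graphArcs (cone G)

lemma HasOpenCover.map_iso {ι : Type*} [Fintype ι] {G : SimpleGraph V} {H : SimpleGraph W}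
    {u : ι → V} {v : ι → W} (h : HasOpenCover G u) (e : G ≃g H) (huv : ∀ i, e (u i) = v i) :
    HasOpenCover H v := by
  obtain rfl : (fun i => e (u i)) = v := funext huv
  obtain ⟨p, r, M, hp, hr, hM, hcover⟩ := h
  refine ⟨fun i => (p i).map e, fun i => (r i).map e, M.map (List.map e), ?_, ?_, ?_, ?_⟩
  · exact fun i => by simpa using (hp i).map e.injective
  · exact fun i => by simpa using (hr i).map e.injective
  · simpa [List.nodup_map_iff e.injective] using hM
  · rw [← graphArcs_map_iso (coneIso e), ← hcover]
    simp only [sum_eq_bind, Multiset.map_add, Multiset.map_bind, Multiset.bind_map,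
      ← List.map_cons, ← List.map_append, circuit_map]
    rfl

lemma HasOPPDC.hasOpenCover {G : SimpleGraph V} (h : HasOPPDC G) (u : V) :
    HasOpenCover G ![u] := by
  obtain ⟨L, hL⟩ := hasOPPDC_iff.1 h
  obtain ⟨p, hpL, hp⟩ := hL.exists_mem_circuit_iff (a := some u) (b := none) |>.2 trivial
  obtain ⟨q, rfl⟩ := List.getLast?_eq_some_iff.1 (some_none_mem_circuit.1 hp)
  obtain ⟨M, rfl⟩ := Multiset.exists_cons_of_mem hpL
  refine ⟨![q], ![[]], M, ?_, ?_, fun q hq => hL.nodup q (Multiset.mem_cons_of_mem hq), ?_⟩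
  · simpa using hL.nodup _ hpL
  · simp
  · simpa using hL.bind_circuit

/-- The path that ends in `u` and the path that uses the arc from `u` to `w` are different, and
both can be opened at `u`. -/
lemma HasOPPDC.hasOpenCover_self {G : SimpleGraph V} (h : HasOPPDC G) {u w : V}
    (huw : G.Adj u w) : HasOpenCover G ![u, u] := by
  obtain ⟨L, hL⟩ := hasOPPDC_iff.1 h
  obtain ⟨p, hpL, hp⟩ := hL.exists_mem_circuit_iff (a := some u) (b := none) |>.2 trivial
  obtain ⟨q, rfl⟩ := List.getLast?_eq_some_iff.1 (some_none_mem_circuit.1 hp)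
  obtain ⟨_, hpL', huw'⟩ := hL.exists_mem_circuit_iff (a := some u) (b := some w) |>.2 huw
  obtain ⟨x, y, rfl⟩ := mem_zip_tail_iff.1 (some_some_mem_circuit.1 huw')
  obtain ⟨M', rfl⟩ := Multiset.exists_cons_of_mem hpL
  have hp := hL.nodup _ hpL
  have hp' := hL.nodup _ hpL'
  have hr : (u :: w :: y).Nodup := hp'.of_append_right
  have hne : x ++ u :: w :: y ≠ q ++ [u] := by
    intro heq
    refine (List.nodup_cons.1 hr).1 (List.mem_of_getLast? ?_)
    simpa using congrArg List.getLast? heq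
  obtain ⟨M, rfl⟩ := Multiset.exists_cons_of_mem ((Multiset.mem_cons.1 hpL').resolve_left hne)
  refine ⟨![q, x], ![[], w :: y], M, ?_, ?_, fun q hq => hL.nodup q (by simp [hq]), ?_⟩
  · have hx : (x ++ [u]).Nodup := hp'.sublist (by simp)
    simpa [Fin.forall_fin_two] using ⟨hp, hx⟩
  · simpa [Fin.forall_fin_two] using hr
  · simpa [Fin.sum_univ_two, add_assoc] using hL.bind_circuit

end Covers

section Fragments

/-- A multiset of arcs of a cone over `withVertex G N` that is made up of circuits avoiding the
new vertex, of paths from the apex to the new vertex and of paths back. Such a path with an inner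
vertex is recorded without its arc at the new vertex, the others, single arcs, are counted. -/
def IsFragmented (s : Multiset (Option (Option V) × Option (Option V))) : Prop :=
  ∃ (Q : Multiset (List V × V)) (R : Multiset (V × List V)) (M : Multiset (List V)) (m n : ℕ),
    (∀ q ∈ Q, (q.1 ++ [q.2]).Nodup) ∧ (∀ r ∈ R, (r.1 :: r.2).Nodup) ∧ (∀ q ∈ M, q.Nodup) ∧
    s = extendArcs (Q.bind (fun q => arcs none (q.1.map some) (some q.2)) +
        R.bind (fun r => arcs (some r.1) (r.2.map some) none) + M.bind circuit)
      (Q.map Prod.snd) (R.map Prod.fst) m n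

namespace IsFragmented

lemma zero : IsFragmented (0 : Multiset (Option (Option V) × Option (Option V))) :=
  ⟨0, 0, 0, 0, 0, by simp [extendArcs]⟩

lemma add {s t : Multiset (Option (Option V) × Option (Option V))} :
    IsFragmented s → IsFragmented t → IsFragmented (s + t) := by
  rintro ⟨Q, R, M, m, n, hQ, hR, hM, rfl⟩ ⟨Q', R', M', m', n', hQ', hR', hM', rfl⟩
  refine ⟨Q + Q', R + R', M + M', m + m', n + n', ?_, ?_, ?_, ?_⟩
  · simpa only [Multiset.mem_add, or_imp, forall_and] using ⟨hQ, hQ'⟩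
  · simpa only [Multiset.mem_add, or_imp, forall_and] using ⟨hR, hR'⟩
  · simpa only [Multiset.mem_add, or_imp, forall_and] using ⟨hM, hM'⟩
  · simp only [← extendArcs_add, Multiset.add_bind, Multiset.map_add]
    congr 1
    abel

lemma circuit_map_some {p : List V} (hp : p.Nodup) :
    IsFragmented (circuit (p.map some)) :=
  ⟨0, 0, {p}, 0, 0, by simp, by simp, by simpa, by simp [circuit_map, extendArcs]⟩

lemma arcs_none_some {p : List V} (hp : p.Nodup) :
    IsFragmented (arcs none ((p.map some).map some) (some none)) := by
  rcases p.eq_nil_or_concat' with rfl | ⟨q, a, rfl⟩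
  · exact ⟨0, 0, 0, 1, 0, by simp [extendArcs]⟩
  · refine ⟨{(q, a)}, 0, 0, 0, 0, by simpa, by simp, by simp, ?_⟩
    simp [extendArcs, ← arcs_map]

lemma arcs_some_none {p : List V} (hp : p.Nodup) :
    IsFragmented (arcs (some none) ((p.map some).map some) none) := by
  rcases p with _ | ⟨a, q⟩
  · exact ⟨0, 0, 0, 0, 1, by simp [extendArcs]⟩
  · refine ⟨0, {(a, q)}, 0, 0, 0, by simp, by simpa using hp, by simp, ?_⟩
    simp [extendArcs, ← arcs_map, add_comm]

lemma of_nodup {p : List (Option V)} (hp : p.Nodup) : IsFragmented (circuit p) := by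
  have exists_map_some {q : List (Option V)} (hq : none ∉ q) (hnodup : q.Nodup) :
      ∃ q' : List V, q'.Nodup ∧ q'.map some = q := by
    obtain ⟨q, rfl⟩ : q ∈ Set.range (List.map some) := by
      rw [Set.range_list_map]
      exact fun a ha => Option.ne_none_iff_exists.1 (ne_of_mem_of_not_mem ha hq)
    exact ⟨q, hnodup.of_map, rfl⟩
  by_cases hnone : none ∈ p
  · obtain ⟨x, y, rfl⟩ := List.append_of_mem hnone
    obtain ⟨hnotMem, hxy⟩ := List.nodup_cons.1 (List.nodup_middle.1 hp)
    rw [List.mem_append, not_or] at hnotMem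
    obtain ⟨x, hx, rfl⟩ := exists_map_some hnotMem.1 hxy.of_append_left
    obtain ⟨y, hy, rfl⟩ := exists_map_some hnotMem.2 hxy.of_append_right
    simpa [circuit] using (arcs_none_some hx).add (arcs_some_none hy)
  · obtain ⟨q, hq, rfl⟩ := exists_map_some hnone hp
    exact circuit_map_some hq

lemma bind_circuit {L : Multiset (List (Option V))} (hL : ∀ p ∈ L, p.Nodup) :
    IsFragmented (L.bind circuit) := by
  induction L using Multiset.induction with
  | empty => exact zero
  | cons p L ih =>
    rw [Multiset.forall_mem_cons] at hL
    simpa only [Multiset.cons_bind] using (of_nodup hL.1).add (ih hL.2)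

end IsFragmented

lemma exists_eq_pair_of_map_eq_pair {f : V → W} {s : Multiset V} {a b : W}
    (h : s.map f = {a, b}) : ∃ x y, s = {x, y} ∧ f x = a ∧ f y = b := by
  classical
  obtain ⟨x, hx, hxa, hrest⟩ := (Multiset.map_eq_cons f s {b} a).2 h
  obtain ⟨y, hy, hyb⟩ := Multiset.map_eq_singleton.1 hrest
  exact ⟨x, y, by rw [← Multiset.cons_erase hx, hy]; rfl, hxa, hyb⟩

lemma HasOPPDC.hasOpenCover_of_withVertex [Finite V] {G : SimpleGraph V} {u v : V} (huv : u ≠ v)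
    (h : HasOPPDC (withVertex G {u, v})) : HasOpenCover G ![u, v] := by
  obtain ⟨L, hL⟩ := hasOPPDC_iff.1 h
  obtain ⟨Q, R, M, m, n, hQ, hR, hM, hfrag⟩ := IsFragmented.bind_circuit hL.nodup
  rw [hL.bind_circuit, graphArcs_cone_withVertex G huv] at hfrag
  obtain ⟨hcover, hsnd, hfst⟩ := eq_of_extendArcs_eq hfrag
  obtain ⟨q₁, q₂, rfl, rfl, rfl⟩ := exists_eq_pair_of_map_eq_pair hsnd.symm
  obtain ⟨r₁, r₂, rfl, hr₁, hr₂⟩ := exists_eq_pair_of_map_eq_pair hfst.symm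
  refine ⟨![q₁.1, q₂.1], ![r₁.2, r₂.2], M, ?_, ?_, hM, ?_⟩
  · simpa [Fin.forall_fin_two] using hQ
  · simpa [Fin.forall_fin_two, ← hr₁, ← hr₂] using hR
  · rw [hcover]
    simp only [circuit, List.map_append, List.map_cons, arcs_append_cons, Fin.sum_univ_two,
      Matrix.cons_val_zero, Matrix.cons_val_one, Matrix.cons_val_fin_one,
      Multiset.insert_eq_cons, Multiset.cons_bind, Multiset.singleton_bind, hr₁, hr₂,
      add_left_inj]
    abel

end Fragments

section Join

variable [Finite V] [Finite W] {ι : Type*} [Fintype ι]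

lemma graphArcs_cone_sum {G : SimpleGraph (V ⊕ W)} {u : ι → V} {v : ι → W}
    (hG : ∀ a b, G.Adj (.inl a) (.inr b) ↔ ∃ i, u i = a ∧ v i = b)
    (hinj : Function.Injective fun i => (u i, v i)) :
    graphArcs (cone G) =
      (graphArcs (cone (G.comap Sum.inl))).map (Prod.map (Option.map .inl) (Option.map .inl)) +
        (graphArcs (cone (G.comap Sum.inr))).map (Prod.map (Option.map .inr) (Option.map .inr)) +
      (Finset.univ.val.map (fun i => (some (.inl (u i)), some (.inr (v i)))) +
        Finset.univ.val.map (fun i => (some (.inr (v i)), some (.inl (u i))))) := by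
  have hinl := Option.map_injective (Sum.inl_injective (α := V) (β := W))
  have hinr := Option.map_injective (Sum.inr_injective (α := V) (β := W))
  have eq_none {a : Option V} {b : Option W} (h : a.map (Sum.inl (β := W)) = b.map Sum.inr) :
      a = none := by
    cases a <;> cases b <;> simp_all
  have hG' (a : V) (b : W) : G.Adj (.inr b) (.inl a) ↔ ∃ i, u i = a ∧ v i = b := by
    rw [G.adj_comm, hG]
  refine ((eq_graphArcs_iff ?_).2 ?_).symm
  · simp only [Multiset.nodup_add, Multiset.disjoint_add_left, Multiset.disjoint_add_right,
      Multiset.disjoint_map_map]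
    refine ⟨⟨(nodup_graphArcs _).map (hinl.prodMap hinl), (nodup_graphArcs _).map
      (hinr.prodMap hinr), ?_⟩, ⟨?_, ?_, by simp⟩, ⟨?_, ?_⟩, ?_, ?_⟩
    · rintro ⟨a, b⟩ hab ⟨c, d⟩ - heq
      obtain ⟨ha, hb⟩ := Prod.mk.inj heq
      rw [mem_graphArcs, eq_none ha, eq_none hb] at hab
      exact hab
    · exact Finset.univ.nodup.map fun i j hij => hinj (by simpa using hij)
    · exact Finset.univ.nodup.map fun i j hij => hinj (by simpa [and_comm] using hij)
    all_goals rintro ⟨_ | a, _ | b⟩ - i - <;> simp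
  · rintro (_ | a | b) (_ | a' | b') <;> simp [hG, hG', and_comm]

/-- Two open covers are joined along new edges `u i — v i` by letting the two walks that pass
through `u i` and `v i` swap their ends. -/
lemma HasOpenCover.join {G : SimpleGraph (V ⊕ W)} {u : ι → V} {v : ι → W}
    (hu : HasOpenCover (G.comap Sum.inl) u) (hv : HasOpenCover (G.comap Sum.inr) v)
    (hG : ∀ a b, G.Adj (.inl a) (.inr b) ↔ ∃ i, u i = a ∧ v i = b)
    (hinj : Function.Injective fun i => (u i, v i)) : HasOPPDC G := by
  obtain ⟨p, r, M, hp, hr, hM, hcover⟩ := hu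
  obtain ⟨p', r', M', hp', hr', hM', hcover'⟩ := hv
  refine IsCircuitCover.hasOPPDC (L := Finset.univ.val.map (fun i =>
      (p i).map .inl ++ .inl (u i) :: .inr (v i) :: (r' i).map .inr) +
    Finset.univ.val.map (fun i =>
      (p' i).map .inr ++ .inr (v i) :: .inl (u i) :: (r i).map .inl) +
    (M.map (List.map .inl) + M'.map (List.map .inr))) ⟨?_, ?_⟩
  · have nodup_inl_inr {q : List V} {s : List W} (hq : q.Nodup) (hs : s.Nodup) :
        (q.map Sum.inl ++ s.map Sum.inr).Nodup :=
      (hq.map Sum.inl_injective).append (hs.map Sum.inr_injective) (by simp [List.Disjoint])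
    have nodup_inr_inl {q : List V} {s : List W} (hq : q.Nodup) (hs : s.Nodup) :
        (s.map Sum.inr ++ q.map Sum.inl).Nodup := List.nodup_append_comm.2 (nodup_inl_inr hq hs)
    simp only [Multiset.mem_add, Multiset.mem_map]
    rintro _ ((⟨i, -, rfl⟩ | ⟨i, -, rfl⟩) | ⟨q, hq, rfl⟩ | ⟨q, hq, rfl⟩)
    · simpa using nodup_inl_inr (hp i) (hr' i)
    · simpa using nodup_inr_inl (hr i) (hp' i)
    · exact (hM q hq).map Sum.inl_injective
    · exact (hM' q hq).map Sum.inr_injective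
  · rw [graphArcs_cone_sum hG hinj, ← hcover, ← hcover']
    simp only [sum_eq_bind, circuit, Multiset.add_bind, Multiset.bind_map, Multiset.map_add,
      Multiset.map_bind, arcs_append_cons, arcs_cons, List.map_append, List.map_cons, List.map_map,
      ← arcs_map, Multiset.bind_add, Multiset.bind_singleton, Option.map_none, Option.map_some,
      Option.map_comp_some]
    abel

end Join

section DegreeTwo

variable [Finite V] {G : SimpleGraph V} {v w : V}

lemma hasOPPDC_withVertex_of_bind_eq (hvw : v ≠ w) {A : Multiset (Option V × Option V)}
    {M : Multiset (List V)} {N : Multiset (List (Option V))} (hM : ∀ p ∈ M, p.Nodup)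
    (hN : ∀ p ∈ N, p.Nodup) (hA : A + M.bind circuit = graphArcs (cone G))
    (hbind : N.bind circuit = extendArcs A {v, w} {v, w} 1 1) :
    HasOPPDC (withVertex G {v, w}) := by
  refine IsCircuitCover.hasOPPDC (L := N + M.map (List.map some)) ⟨?_, ?_⟩
  · simp only [Multiset.mem_add, Multiset.mem_map]
    rintro _ (hp | ⟨p, hp, rfl⟩)
    exacts [hN _ hp, (hM p hp).map (Option.some_injective V)]
  · rw [graphArcs_cone_withVertex G hvw, ← hA]
    simp only [Multiset.add_bind, Multiset.bind_map, circuit_map, hbind, extendArcs,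
      Multiset.map_add, Multiset.map_bind]
    abel

omit [Finite V] in
lemma nodup_map_some_append_none_cons {x y : List V} :
    (x.map some ++ none :: y.map some).Nodup ↔ (x ++ y).Nodup := by
  simp [List.nodup_middle, ← List.map_append, List.nodup_map_iff (Option.some_injective V)]

lemma graphArcs_cone_sup_edge (hvw : v ≠ w) (hnadj : ¬ G.Adj v w) :
    graphArcs (cone (G ⊔ edge v w)) =
      graphArcs (cone G) + ({(some v, some w)} + {(some w, some v)}) := by
  have hnadj' : ¬ G.Adj w v := mt Adj.symm hnadj
  refine ((eq_graphArcs_iff ?_).2 ?_).symm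
  · simp [Multiset.nodup_add, nodup_graphArcs, hvw, hnadj, hnadj']
  · rintro (_ | a) (_ | b)
    · simp
    · simp
    · simp
    · simp only [Multiset.singleton_add, Multiset.add_cons, Multiset.mem_cons, Prod.mk.injEq,
        Option.some.injEq, Multiset.mem_add, mem_graphArcs, withVertex_some_some,
        Multiset.mem_singleton, sup_adj]
      grind

omit [Finite V] in
lemma append_cons_cons_ne_of_nodup {x y z t : List V} (h : (x ++ v :: w :: y).Nodup) :
    x ++ v :: w :: y ≠ z ++ w :: v :: t := by
  classical
  intro heq
  have h' := heq ▸ h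
  have hv := congrArg (List.idxOf v) heq
  have hw := congrArg (List.idxOf w) heq
  simp only [List.nodup_cons, List.nodup_append] at h h'
  rw [List.idxOf_append_of_notMem, List.idxOf_append_of_notMem] at hv hw
  all_goals grind

namespace IsCircuitCover

variable {L : Multiset (List V)}

lemma exists_append_cons_cons_mem (h : IsCircuitCover G L) (hvw : G.Adj v w) :
    ∃ x y, x ++ v :: w :: y ∈ L := by
  obtain ⟨p, hpL, hp⟩ := h.exists_mem_circuit_iff (a := some v) (b := some w) |>.2 hvw
  obtain ⟨x, y, rfl⟩ := mem_zip_tail_iff.1 (some_some_mem_circuit.1 hp)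
  exact ⟨x, y, hpL⟩

lemma exists_cons_mem (h : IsCircuitCover G L) (v : V) : ∃ s, v :: s ∈ L := by
  obtain ⟨q, hqL, hq⟩ := h.exists_mem_circuit_iff (a := none) (b := some v) |>.2 trivial
  obtain ⟨s, rfl⟩ := List.head?_eq_some_iff.1 (none_some_mem_circuit.1 hq)
  exact ⟨s, hqL⟩

end IsCircuitCover

lemma HasOPPDC.withVertex_of_sup_edge (hvw : v ≠ w) (hnadj : ¬ G.Adj v w)
    (h : HasOPPDC (G ⊔ edge v w)) : HasOPPDC (withVertex G {v, w}) := by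
  obtain ⟨L, hL⟩ := hasOPPDC_iff.1 h
  have hadj : (G ⊔ edge v w).Adj v w := by simp [edge_adj, hvw]
  obtain ⟨x, y, hxy⟩ := hL.exists_append_cons_cons_mem hadj
  obtain ⟨z, t, hzt⟩ := hL.exists_append_cons_cons_mem hadj.symm
  have hxy_nodup := hL.nodup _ hxy
  have hzt_nodup := hL.nodup _ hzt
  obtain ⟨M', rfl⟩ := Multiset.exists_cons_of_mem hxy
  obtain ⟨M, rfl⟩ := Multiset.exists_cons_of_mem
    ((Multiset.mem_cons.1 hzt).resolve_left (append_cons_cons_ne_of_nodup hzt_nodup))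
  refine hasOPPDC_withVertex_of_bind_eq hvw (M := M)
    (A := arcs none (x.map some) (some v) + arcs (some w) (y.map some) none +
      (arcs none (z.map some) (some w) + arcs (some v) (t.map some) none))
    (N := {(x ++ [v]).map some ++ none :: (w :: y).map some,
      (z ++ [w]).map some ++ none :: (v :: t).map some, [none]}) ?_ ?_ ?_ ?_
  · exact fun p hp => hL.nodup _ (by simp [hp])
  · simp only [Multiset.insert_eq_cons, Multiset.forall_mem_cons, Multiset.mem_singleton,
      forall_eq, nodup_map_some_append_none_cons]
    simp [hxy_nodup, hzt_nodup]
  · refine add_right_cancel (b := {(some v, some w)} + {(some w, some v)}) ?_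
    rw [← graphArcs_cone_sup_edge hvw hnadj, ← hL.bind_circuit]
    simp only [circuit, Multiset.cons_bind, List.map_append, List.map_cons, arcs_append_cons,
      arcs_cons]
    abel
  · simp only [extendArcs, circuit, Multiset.insert_eq_cons, ← Multiset.singleton_add,
      Multiset.add_bind, Multiset.singleton_bind, Multiset.map_add, Multiset.map_singleton,
      List.map_append, List.map_cons, List.map_nil, arcs_append_cons, arcs_cons, arcs_nil,
      ← arcs_map, Option.map_none, Option.map_some, List.map_map, Option.map_comp_some, one_smul]
    abel

namespace IsCircuitCover

variable {L : Multiset (List V)} {x y : List V}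

lemma hasOPPDC_withVertex_of_left_ne_nil (h : IsCircuitCover G L)
    (hp : x ++ v :: w :: y ∈ L) (hx : x ≠ []) : HasOPPDC (withVertex G {v, w}) := by
  have hp_nodup := h.nodup _ hp
  have hvw_nodup : (v :: w :: y).Nodup := hp_nodup.of_append_right
  have hvw : v ≠ w := by rintro rfl; simp at hvw_nodup
  obtain ⟨s, hs⟩ := h.exists_cons_mem v
  have hs_nodup := h.nodup _ hs
  have hne : v :: s ≠ x ++ v :: w :: y := by
    obtain ⟨c, x, rfl⟩ := List.exists_cons_of_ne_nil hx
    intro heq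
    simp_all
  obtain ⟨M', rfl⟩ := Multiset.exists_cons_of_mem hp
  obtain ⟨M, rfl⟩ := Multiset.exists_cons_of_mem ((Multiset.mem_cons.1 hs).resolve_left hne)
  refine hasOPPDC_withVertex_of_bind_eq hvw (M := M)
    (A := circuit (x ++ v :: w :: y) + circuit (v :: s))
    (N := {(x ++ [v]).map some ++ none :: (w :: y).map some,
      ([] : List V).map some ++ none :: (v :: s).map some, [some v, some w, none]}) ?_ ?_ ?_ ?_
  · exact fun p hp => h.nodup _ (by simp [hp])
  · simp only [Multiset.insert_eq_cons, Multiset.forall_mem_cons, Multiset.mem_singleton,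
      forall_eq, nodup_map_some_append_none_cons]
    simpa [hp_nodup, hvw] using hs_nodup
  · rw [← h.bind_circuit, Multiset.cons_bind, Multiset.cons_bind, add_assoc]
  · simp only [extendArcs, circuit, Multiset.insert_eq_cons, ← Multiset.singleton_add,
      Multiset.add_bind, Multiset.singleton_bind, Multiset.map_add, Multiset.map_singleton,
      List.map_append, List.map_cons, List.map_nil, List.nil_append, arcs_append_cons, arcs_cons,
      arcs_nil, ← arcs_map, Prod.map_apply, Option.map_none, Option.map_some, List.map_map,
      Option.map_comp_some, one_smul]
    abel

lemma hasOPPDC_withVertex_of_right_ne_nil (h : IsCircuitCover G L)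
    (hp : x ++ v :: w :: y ∈ L) (hy : y ≠ []) : HasOPPDC (withVertex G {v, w}) := by
  have hrev := Multiset.mem_map_of_mem List.reverse hp
  rw [Set.pair_comm]
  refine h.reverse.hasOPPDC_withVertex_of_left_ne_nil (x := y.reverse) (y := x.reverse) ?_ ?_
  · simpa using hrev
  · simpa using hy

lemma hasOPPDC_withVertex_or_mem (h : IsCircuitCover G L) (hvw : G.Adj v w) :
    HasOPPDC (withVertex G {v, w}) ∨ [v, w] ∈ L := by
  obtain ⟨x, y, hp⟩ := h.exists_append_cons_cons_mem hvw
  rcases eq_or_ne x [] with rfl | hx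
  · rcases eq_or_ne y [] with rfl | hy
    · exact .inr hp
    · exact .inl (h.hasOPPDC_withVertex_of_right_ne_nil hp hy)
  · exact .inl (h.hasOPPDC_withVertex_of_left_ne_nil hp hx)

/-- The path through `v` swaps its tail with the path from `v` to `w`. -/
lemma hasOPPDC_withVertex_of_pair_mem (h : IsCircuitCover G L) (hvw : [v, w] ∈ L)
    (hp : x ++ v :: y ∈ L) (hx : x ≠ []) (hw : w ∉ x) : HasOPPDC (withVertex G {v, w}) := by
  have hvw_nodup := h.nodup _ hvw
  have hp_nodup := h.nodup _ hp
  have hne : x ++ v :: y ≠ [v, w] := by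
    obtain ⟨c, x, rfl⟩ := List.exists_cons_of_ne_nil hx
    grind
  obtain ⟨M', rfl⟩ := Multiset.exists_cons_of_mem hvw
  obtain ⟨M, rfl⟩ := Multiset.exists_cons_of_mem ((Multiset.mem_cons.1 hp).resolve_left hne)
  have hcover : IsCircuitCover G ((x ++ [v, w]) ::ₘ (v :: y) ::ₘ M) := by
    refine ⟨?_, ?_⟩
    · simp only [Multiset.forall_mem_cons]
      refine ⟨?_, hp_nodup.of_append_right, fun p hp => h.nodup p (by simp [hp])⟩
      grind
    · rw [← h.bind_circuit]
      simp only [circuit, Multiset.cons_bind, List.map_append, List.map_cons, List.map_nil,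
        arcs_append_cons, arcs_cons, arcs_nil]
      abel
  exact hcover.hasOPPDC_withVertex_of_left_ne_nil (Multiset.mem_cons_self _ _) hx

end IsCircuitCover

lemma HasOPPDC.withVertex_of_adj (h : HasOPPDC G) (hvw : G.Adj v w) {b : V} (hvb : G.Adj v b)
    (hbw : b ≠ w) : HasOPPDC (withVertex G {v, w}) := by
  obtain ⟨L, hL⟩ := hasOPPDC_iff.1 h
  refine (hL.hasOPPDC_withVertex_or_mem hvw).elim id fun hmem => ?_
  refine (hL.hasOPPDC_withVertex_or_mem hvw.symm).elim (Set.pair_comm v w ▸ ·) fun hmem' => ?_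
  obtain ⟨x, y, hp⟩ := hL.exists_append_cons_cons_mem hvb
  have hx : x ≠ [] := by
    rintro rfl
    have heq := hL.eq_of_mem_circuit hp hmem (e := (none, some v)) (by simp) (by simp)
    simp_all
  by_cases hw : w ∈ x
  · have hdisj := List.disjoint_of_nodup_append (hL.nodup _ hp) hw
    have hrev := Multiset.mem_map_of_mem List.reverse hp
    refine hL.reverse.hasOPPDC_withVertex_of_pair_mem (x := (b :: y).reverse) (y := x.reverse)
      (Multiset.mem_map_of_mem List.reverse hmem') ?_ ?_ ?_
    · simpa using hrev
    · simp
    · simpa [and_comm] using fun h => hdisj (List.mem_cons_of_mem _ h)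
  · exact hL.hasOPPDC_withVertex_of_pair_mem hmem hp hx hw

end DegreeTwo

section Complete

instance {G : SimpleGraph V} {N : Set V} [DecidableRel G.Adj] [DecidablePred (· ∈ N)] :
    DecidableRel (withVertex G N).Adj
  | none, none => isFalse id
  | none, some b => inferInstanceAs (Decidable (b ∈ N))
  | some a, none => inferInstanceAs (Decidable (a ∈ N))
  | some a, some b => inferInstanceAs (Decidable (G.Adj a b))

/-- The kernel can evaluate this instance, unlike the one of the library. -/
instance [DecidableEq V] (v w : V) : DecidableRel (edge v w).Adj := fun _ _ =>
  decidable_of_iff' _ (edge_adj ..)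

lemma hasOpenCover_top_three : HasOpenCover (⊤ : SimpleGraph (Fin 3)) ![0] := by
  refine ⟨![[2]], ![[2, 1]], {[0, 1, 2], [1, 0]}, by decide, by decide, by decide, ?_⟩
  exact (eq_graphArcs_iff (by decide)).2 (by decide)

lemma hasOpenCover_self_top_three : HasOpenCover (⊤ : SimpleGraph (Fin 3)) ![0, 0] := by
  refine ⟨![[2, 1], []], ![[2], [1]], {[1, 2, 0]}, by decide, by decide, by decide, ?_⟩
  exact (eq_graphArcs_iff (by decide)).2 (by decide)

lemma hasOpenCover_top_five : HasOpenCover (⊤ : SimpleGraph (Fin 5)) ![0] := by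
  refine ⟨![[1, 4, 2, 3]], ![[4, 3, 1, 2]],
    {[2, 0, 1, 3, 4], [0, 3], [3, 2, 4, 1, 0], [4, 0, 2, 1]},
    by decide, by decide, by decide, ?_⟩
  exact (eq_graphArcs_iff (by decide +kernel)).2 (by decide +kernel)

lemma hasOpenCover_self_top_five : HasOpenCover (⊤ : SimpleGraph (Fin 5)) ![0, 0] := by
  refine ⟨![[3, 2, 4], [1]], ![[3, 1, 2], [2, 1, 4, 3]],
    {[2, 0, 4, 1], [0, 1, 3, 4], [4, 2, 3, 0]}, by decide, by decide, by decide, ?_⟩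
  exact (eq_graphArcs_iff (by decide +kernel)).2 (by decide +kernel)

lemma hasOpenCover_top_two : HasOpenCover (⊤ : SimpleGraph (Fin 2)) ![0, 1] := by
  refine ⟨![[1], [0]], ![[], []], 0, by decide, by decide, by decide, ?_⟩
  exact (eq_graphArcs_iff (by decide)).2 (by decide)

lemma hasOPPDC_withVertex_top_three :
    HasOPPDC (withVertex (⊤ : SimpleGraph (Fin 3)) {0, 1}) := by
  refine IsCircuitCover.hasOPPDC (L := Multiset.map (List.map (finSuccEquiv 3))
    {[0, 1, 2, 3], [1, 3, 2, 0], [2, 1], [3, 1, 0, 2]}) ⟨by decide, ?_⟩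
  exact (eq_graphArcs_iff (by decide)).2 (by decide)

lemma hasOPPDC_withVertex_top_five :
    HasOPPDC (withVertex (⊤ : SimpleGraph (Fin 5)) {0, 1}) := by
  refine IsCircuitCover.hasOPPDC (L := Multiset.map (List.map (finSuccEquiv 5))
    {[0, 1, 2, 3], [1, 0, 2, 4, 3, 5], [2, 1, 5, 3, 4], [3, 1, 4, 5, 2], [4, 2, 5, 1],
      [5, 4, 1, 3, 2, 0]}) ⟨by decide, ?_⟩
  exact (eq_graphArcs_iff (by decide +kernel)).2 (by decide +kernel)

lemma hasOPPDC_withVertex_compl_edge_three :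
    HasOPPDC (withVertex (edge (0 : Fin 3) 1)ᶜ {0, 1}) := by
  refine IsCircuitCover.hasOPPDC (L := Multiset.map (List.map (finSuccEquiv 3))
    {[0, 1], [1, 3, 2, 0], [2, 3], [3, 1, 0, 2]}) ⟨by decide, ?_⟩
  exact (eq_graphArcs_iff (by decide)).2 (by decide)

lemma hasOPPDC_withVertex_compl_edge_five :
    HasOPPDC (withVertex (edge (0 : Fin 5) 1)ᶜ {0, 1}) := by
  refine IsCircuitCover.hasOPPDC (L := Multiset.map (List.map (finSuccEquiv 5))
    {[0, 1], [1, 0, 2, 3, 4, 5], [2, 5, 1, 4, 3], [3, 1, 5, 4, 2], [4, 1, 3, 5, 2, 0],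
      [5, 3, 2, 4]}) ⟨by decide, ?_⟩
  exact (eq_graphArcs_iff (by decide +kernel)).2 (by decide +kernel)

end Complete

section Transport

lemma withVertex_eq_top_iff {G : SimpleGraph V} {N : Set V} :
    withVertex G N = ⊤ ↔ G = ⊤ ∧ N = Set.univ := by
  simp only [SimpleGraph.ext_iff, funext_iff, top_adj, ne_eq, eq_iff_iff, Option.forall,
    SimpleGraph.irrefl, not_true_eq_false, withVertex_none_some, reduceCtorEq, not_false_eq_true,
    iff_true, true_and, withVertex_some_none, withVertex_some_some, Option.some.injEq,
    Set.eq_univ_iff_forall]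
  grind

lemma nonempty_iso_top_fin_iff [Fintype V] {G : SimpleGraph V} {n : ℕ} :
    Nonempty (G ≃g (⊤ : SimpleGraph (Fin n))) ↔ Fintype.card V = n ∧ G = ⊤ := by
  constructor
  · rintro ⟨e⟩
    refine ⟨by simpa using Fintype.card_congr e.toEquiv, ?_⟩
    ext a b
    simp [← e.map_adj_iff]
  · rintro ⟨hcard, rfl⟩
    exact ⟨Iso.completeGraph (Fintype.equivFinOfCardEq hcard)⟩

lemma exists_iso_apply_zero {G : SimpleGraph V} {n : ℕ}
    (h : Nonempty (G ≃g (⊤ : SimpleGraph (Fin (n + 1))))) (v : V) :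
    ∃ e : (⊤ : SimpleGraph (Fin (n + 1))) ≃g G, e 0 = v := by
  obtain ⟨e⟩ := h
  refine ⟨(Iso.completeGraph (Equiv.swap 0 (e v))).trans e.symm, ?_⟩
  exact (congrArg e.symm (Equiv.swap_apply_left _ _)).trans (e.symm_apply_apply v)

lemma exists_iso_apply_zero_one {G : SimpleGraph V} {n : ℕ}
    (h : Nonempty (G ≃g (⊤ : SimpleGraph (Fin (n + 2))))) {v w : V} (hvw : v ≠ w) :
    ∃ e : (⊤ : SimpleGraph (Fin (n + 2))) ≃g G, e 0 = v ∧ e 1 = w := by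
  obtain ⟨e, rfl⟩ := exists_iso_apply_zero h v
  have hw : 0 ≠ e.symm w := fun h => hvw (e.symm.injective (by simpa using h))
  refine ⟨(Iso.completeGraph (Equiv.swap 1 (e.symm w))).trans e, ?_, ?_⟩
  · exact congrArg e (Equiv.swap_apply_of_ne_of_ne zero_ne_one hw)
  · exact (congrArg e (Equiv.swap_apply_left _ _)).trans (e.apply_symm_apply w)

/-- Deleting the edge `v w` from a complete graph gives the complement of that edge. -/
def complEdgeIso {G : SimpleGraph V} {v w : V} (hnadj : ¬ G.Adj v w)
    (e : (⊤ : SimpleGraph W) ≃g G ⊔ edge v w) {a b : W} (ha : e a = v) (hb : e b = w) :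
    (edge a b)ᶜ ≃g G where
  toEquiv := e.toEquiv
  map_rel_iff' {x y} := by
    have hadj := e.map_adj_iff (v := x) (w := y)
    have hnadj' : ¬ G.Adj w v := mt Adj.symm hnadj
    simp only [top_adj, sup_adj, edge_adj, ← ha, ← hb, e.injective.eq_iff, e.injective.ne_iff]
      at hadj
    simp only [compl_adj, edge_adj]
    change G.Adj (e x) (e y) ↔ _
    grind [G.loopless]

end Transport

section EdgeCut

/-- The arcs of `G` that leave `S`. -/
def edgeCut (G : SimpleGraph V) (S : Set V) : Set (V × V) :=
  {e | G.Adj e.1 e.2 ∧ e.1 ∈ S ∧ e.2 ∉ S}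

lemma preconnected_iff_forall_edgeCut_nonempty {G : SimpleGraph V} :
    G.Preconnected ↔ ∀ S : Set V, S.Nonempty → Sᶜ.Nonempty → (edgeCut G S).Nonempty := by
  constructor
  · rintro hG S ⟨a, ha⟩ ⟨b, hb⟩
    obtain ⟨d, -, hd⟩ := (hG a b).some.exists_boundary_dart S ha hb
    exact ⟨d.toProd, d.adj, hd⟩
  · intro h a b
    by_contra hab
    obtain ⟨⟨x, y⟩, hxy, hax, hay⟩ := h {x | G.Reachable a x} ⟨a, .rfl⟩ ⟨b, hab⟩
    exact hay (hax.trans hxy.reachable)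

lemma edgeCut_compl (G : SimpleGraph V) (S : Set V) :
    edgeCut G Sᶜ = Prod.swap ⁻¹' edgeCut G S := by
  ext ⟨a, b⟩
  simp [edgeCut, G.adj_comm, and_comm]

lemma ncard_edgeCut_compl (G : SimpleGraph V) (S : Set V) :
    (edgeCut G Sᶜ).ncard = (edgeCut G S).ncard := by
  rw [edgeCut_compl, ← Set.image_swap_eq_preimage_swap,
    Set.ncard_image_of_injective _ Prod.swap_injective]

lemma ncard_edgeCut_singleton (G : SimpleGraph V) (x : V) :
    (edgeCut G {x}).ncard = (G.neighborSet x).ncard := by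
  have : edgeCut G {x} = Prod.mk x '' G.neighborSet x := by
    ext ⟨a, b⟩
    simp only [edgeCut, Set.mem_ofPred_eq, Set.mem_singleton_iff, Set.mem_image, mem_neighborSet,
      Prod.mk.injEq]
    constructor
    · rintro ⟨hab, rfl, -⟩
      exact ⟨b, hab, rfl, rfl⟩
    · rintro ⟨b, hab, rfl, rfl⟩
      exact ⟨hab, rfl, hab.ne'⟩
  rw [this, Set.ncard_image_of_injective _ (Prod.mk_right_injective x)]

/-- If `S` induced a disconnected graph, a union of components of it would have a smaller cut. -/
lemma connected_induce_of_ncard_edgeCut_le [Finite V] {G : SimpleGraph V} (hG : G.Connected)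
    {S : Set V} (hS : S.Nonempty) (hSc : Sᶜ.Nonempty)
    (hmin : ∀ T : Set V, T.Nonempty → Tᶜ.Nonempty → (edgeCut G S).ncard ≤ (edgeCut G T).ncard) :
    (G.induce S).Connected := by
  have := hS.to_subtype
  refine ⟨preconnected_iff_forall_edgeCut_nonempty.2 fun A hA hAc => ?_⟩
  by_contra! hcut
  have hnadj {a b : S} (ha : a ∈ A) (hb : b ∉ A) : ¬ G.Adj a b := fun hab =>
    Set.eq_empty_iff_forall_notMem.1 hcut (a, b) ⟨hab, ha, hb⟩
  have cut_subset {B : Set S} (hB : ∀ a ∈ B, ∀ b ∉ B, ¬ G.Adj a b) :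
      edgeCut G ((↑) '' B) ⊆ edgeCut G S := by
    rintro ⟨_, b⟩ ⟨hab, ⟨a, ha, rfl⟩, hb⟩
    exact ⟨hab, a.2, fun hbS => hB a ha ⟨b, hbS⟩ (by simpa [hbS] using hb) hab⟩
  have compl_nonempty (B : Set S) : ((↑) '' B : Set V)ᶜ.Nonempty :=
    hSc.mono (Set.compl_subset_compl.2 (Subtype.coe_image_subset S B))
  obtain ⟨e, he⟩ := preconnected_iff_forall_edgeCut_nonempty.1 hG.preconnected _
    (hAc.image (↑)) (compl_nonempty Aᶜ)
  refine (hmin _ (hA.image (↑)) (compl_nonempty A)).not_gt (Set.ncard_lt_ncard ?_)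
  refine (Set.ssubset_iff_of_subset (cut_subset fun a ha b hb => hnadj ha hb)).2
    ⟨e, cut_subset (fun a ha b hb hab => hnadj (not_not.1 hb) ha hab.symm) he, fun heA => ?_⟩
  obtain ⟨a, ha, hea⟩ := he.2.1
  obtain ⟨b, hb, heb⟩ := heA.2.1
  exact ha (Subtype.ext (heb.trans hea.symm) ▸ hb)

lemma exists_connected_induce_connected_induce_compl [Finite V] {G : SimpleGraph V}
    (hG : G.Connected) {T : Set V} (hT : T.Nonempty) (hTc : Tᶜ.Nonempty) :
    ∃ S : Set V, (G.induce S).Connected ∧ (G.induce Sᶜ).Connected ∧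
      (edgeCut G S).ncard ≤ (edgeCut G T).ncard := by
  obtain ⟨S, ⟨hS, hSc⟩, hmin⟩ :=
    Set.exists_min_image {S : Set V | S.Nonempty ∧ Sᶜ.Nonempty} (fun S => (edgeCut G S).ncard)
      (Set.toFinite _) ⟨T, hT, hTc⟩
  refine ⟨S, connected_induce_of_ncard_edgeCut_le hG hS hSc fun U hU hUc => hmin U ⟨hU, hUc⟩,
    connected_induce_of_ncard_edgeCut_le hG hSc (by simpa using hS) fun U hU hUc => ?_,
    hmin T ⟨hT, hTc⟩⟩
  rw [ncard_edgeCut_compl]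
  exact hmin U ⟨hU, hUc⟩

lemma exists_ncard_edgeCut_le [Finite V] [Nonempty V] {G : SimpleGraph V} {F : Set (Sym2 V)}
    (hF : ¬ (G.deleteEdges F).Connected) :
    ∃ S : Set V, S.Nonempty ∧ Sᶜ.Nonempty ∧ (edgeCut G S).ncard ≤ F.ncard := by
  rw [connected_iff, and_iff_left ‹_›, preconnected_iff_forall_edgeCut_nonempty] at hF
  push Not at hF
  obtain ⟨S, hS, hSc, hcut⟩ := hF
  refine ⟨S, hS, hSc, Set.ncard_le_ncard_of_injOn (fun e => s(e.1, e.2)) ?_ ?_⟩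
  · rintro ⟨a, b⟩ ⟨hab, ha, hb⟩
    by_contra hF
    exact Set.eq_empty_iff_forall_notMem.1 hcut (a, b) ⟨by simp_all, ha, hb⟩
  · rintro ⟨a, b⟩ ⟨-, ha, -⟩ ⟨c, d⟩ ⟨-, -, hd⟩ heq
    grind

lemma hasOPPDC_of_induce [Finite V] {ι : Type*} [Fintype ι] {G : SimpleGraph V} {S : Set V}
    (e : ι ≃ edgeCut G S)
    (hu : HasOpenCover (G.induce S) fun i => ⟨(e i).1.1, (e i).2.2.1⟩)
    (hv : HasOpenCover (G.induce Sᶜ) fun i => ⟨(e i).1.2, (e i).2.2.2⟩) : HasOPPDC G := by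
  classical
  refine HasOPPDC.map_iso (HasOpenCover.join (G := G.comap (Equiv.Set.sumCompl S)) hu hv ?_ ?_)
    (Iso.comap (Equiv.Set.sumCompl S) G)
  · intro a b
    constructor
    · intro hab
      obtain ⟨i, hi⟩ := e.surjective ⟨(a, b), hab, a.2, b.2⟩
      exact ⟨i, by simp [hi]⟩
    · rintro ⟨i, rfl, rfl⟩
      exact (e i).2.1
  · intro i j hij
    simp only [Prod.mk.injEq, Subtype.mk.injEq] at hij
    exact e.injective (Subtype.ext (Prod.ext hij.1 hij.2))

/-- A graph is recovered from a vertex-deleted subgraph by adding the vertex back. -/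
noncomputable def withVertexComplIso (G : SimpleGraph V) (x : V) :
    withVertex (G.induce {x}ᶜ) {y | G.Adj x y} ≃g G := by
  classical
  let e : Option ({x}ᶜ : Set V) ≃ V := Equiv.optionSubtypeNe x
  have he_none : e none = x := Equiv.optionSubtypeNe_none x
  have he_some (a : ({x}ᶜ : Set V)) : e (some a) = a := Equiv.optionSubtypeNe_some x a
  exact ⟨e, by rintro (_ | a) (_ | b) <;> simp [he_none, he_some, G.adj_comm]⟩

end EdgeCut

section Minimality

lemma connected_withVertex {G : SimpleGraph V} (hG : G.Connected) {N : Set V} {v : V}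
    (hv : v ∈ N) : (withVertex G N).Connected := by
  let someHom : G →g withVertex G N := ⟨some, id⟩
  refine connected_iff_exists_forall_reachable _ |>.2 ⟨some v, ?_⟩
  rintro (_ | a)
  · exact Adj.reachable (G := withVertex G N) (u := some v) (v := none) hv
  · exact (hG v a).map someHom

/-- The conjecture for graphs with fewer than `n` vertices: every connected graph other than `K₃`
and `K₅` has an oriented perfect path double cover. -/
def CoveredBelow (n : ℕ) : Prop :=
  ∀ (W : Type) [Fintype W] (H : SimpleGraph W), Fintype.card W < n → H.Connected →
    ¬ Nonempty (H ≃g (⊤ : SimpleGraph (Fin 3))) →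
    ¬ Nonempty (H ≃g (⊤ : SimpleGraph (Fin 5))) → HasOPPDC H

namespace CoveredBelow

variable {n : ℕ} {W : Type} [Fintype W] {H : SimpleGraph W}

lemma hasOpenCover_one (hn : CoveredBelow n) (hW : Fintype.card W < n) (hH : H.Connected)
    (u : Fin 1 → W) : HasOpenCover H u := by
  obtain ⟨u, rfl⟩ : ∃ a, u = ![a] := ⟨u 0, List.ofFn_inj.1 rfl⟩
  by_cases h3 : Nonempty (H ≃g (⊤ : SimpleGraph (Fin 3)))
  · obtain ⟨e, rfl⟩ := exists_iso_apply_zero h3 u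
    exact hasOpenCover_top_three.map_iso e (Fin.forall_fin_one.2 rfl)
  by_cases h5 : Nonempty (H ≃g (⊤ : SimpleGraph (Fin 5)))
  · obtain ⟨e, rfl⟩ := exists_iso_apply_zero h5 u
    exact hasOpenCover_top_five.map_iso e (Fin.forall_fin_one.2 rfl)
  exact (hn W H hW hH h3 h5).hasOpenCover u

lemma hasOpenCover_self [Nontrivial W] (hn : CoveredBelow n) (hW : Fintype.card W < n)
    (hH : H.Connected) (u : W) : HasOpenCover H ![u, u] := by
  by_cases h3 : Nonempty (H ≃g (⊤ : SimpleGraph (Fin 3)))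
  · obtain ⟨e, rfl⟩ := exists_iso_apply_zero h3 u
    exact hasOpenCover_self_top_three.map_iso e (Fin.forall_fin_two.2 ⟨rfl, rfl⟩)
  by_cases h5 : Nonempty (H ≃g (⊤ : SimpleGraph (Fin 5)))
  · obtain ⟨e, rfl⟩ := exists_iso_apply_zero h5 u
    exact hasOpenCover_self_top_five.map_iso e (Fin.forall_fin_two.2 ⟨rfl, rfl⟩)
  obtain ⟨w, huw⟩ := hH.preconnected.exists_adj_of_nontrivial u
  exact (hn W H hW hH h3 h5).hasOpenCover_self huw

lemma hasOpenCover_pair (hn : CoveredBelow n) (hW : Fintype.card W + 1 < n) (hH : H.Connected)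
    {u v : W} (huv : u ≠ v) : HasOpenCover H ![u, v] := by
  by_cases hK2 : H = ⊤ ∧ ({u, v} : Set W) = Set.univ
  · have hcard : Fintype.card W = 2 :=
      Nat.card_eq_fintype_card.symm.trans (Nat.card_eq_two_iff.2 ⟨u, v, huv, hK2.2⟩)
    have h2 := nonempty_iso_top_fin_iff.2 ⟨hcard, hK2.1⟩
    obtain ⟨e, rfl, rfl⟩ := exists_iso_apply_zero_one h2 huv
    exact hasOpenCover_top_two.map_iso e (Fin.forall_fin_two.2 ⟨rfl, rfl⟩)
  have not_complete (m : ℕ) :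
      ¬ Nonempty (withVertex H {u, v} ≃g (⊤ : SimpleGraph (Fin m))) :=
    fun h => hK2 (withVertex_eq_top_iff.1 (nonempty_iso_top_fin_iff.1 h).2)
  have hconn := connected_withVertex hH (Set.mem_insert u {v})
  exact (hn _ _ (by simpa using hW) hconn (not_complete 3) (not_complete 5)
    ).hasOpenCover_of_withVertex huv

lemma hasOpenCover_two [Nontrivial W] (hn : CoveredBelow n) (hW : Fintype.card W + 1 < n)
    (hH : H.Connected) (u : Fin 2 → W) : HasOpenCover H u := by
  obtain ⟨a, b, rfl⟩ : ∃ a b, u = ![a, b] := ⟨u 0, u 1, List.ofFn_inj.1 rfl⟩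
  obtain rfl | hab := eq_or_ne a b
  · exact hn.hasOpenCover_self (by lia) hH a
  · exact hn.hasOpenCover_pair hW hH hab

lemma hasOPPDC_withVertex_of_adj (hn : CoveredBelow n) (hW : Fintype.card W < n)
    (hH : H.Connected) {v w : W} (hvw : H.Adj v w)
    (hK3 : ¬ Nonempty (withVertex H {v, w} ≃g (⊤ : SimpleGraph (Fin 3)))) :
    HasOPPDC (withVertex H {v, w}) := by
  by_cases h3 : Nonempty (H ≃g (⊤ : SimpleGraph (Fin 3)))
  · obtain ⟨e, rfl, rfl⟩ := exists_iso_apply_zero_one h3 hvw.ne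
    exact hasOPPDC_withVertex_top_three.map_iso (withVertexIso e (by simp))
  by_cases h5 : Nonempty (H ≃g (⊤ : SimpleGraph (Fin 5)))
  · obtain ⟨e, rfl, rfl⟩ := exists_iso_apply_zero_one h5 hvw.ne
    exact hasOPPDC_withVertex_top_five.map_iso (withVertexIso e (by simp))
  have hcover := hn W H hW hH h3 h5
  obtain huniv | ⟨x, hx⟩ := Set.eq_empty_or_nonempty ({v, w} : Set W)ᶜ
  · rw [Set.compl_empty_iff] at huniv
    have hcard : Fintype.card W = 2 :=
      Nat.card_eq_fintype_card.symm.trans (Nat.card_eq_two_iff.2 ⟨v, w, hvw.ne, huniv⟩)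
    have htop : H = ⊤ := by
      refine eq_top_iff.2 fun a b hab => ?_
      have ha := huniv.ge (Set.mem_univ a)
      have hb := huniv.ge (Set.mem_univ b)
      grind [Adj.symm, Adj.ne]
    exact absurd (nonempty_iso_top_fin_iff.2
      ⟨by simp [hcard], withVertex_eq_top_iff.2 ⟨htop, huniv⟩⟩) hK3
  obtain ⟨⟨a, b⟩, hab, rfl | rfl, hb⟩ := preconnected_iff_forall_edgeCut_nonempty.1
    hH.preconnected {v, w} ⟨v, by simp⟩ ⟨x, hx⟩
  · exact hcover.withVertex_of_adj hvw hab fun h => hb (.inr h)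
  · rw [Set.pair_comm]
    exact hcover.withVertex_of_adj hvw.symm hab fun h => hb (.inl h)

lemma hasOPPDC_withVertex_of_not_adj (hn : CoveredBelow n) (hW : Fintype.card W < n)
    (hH : H.Connected) {v w : W} (hne : v ≠ w) (hvw : ¬ H.Adj v w) :
    HasOPPDC (withVertex H {v, w}) := by
  by_cases h3 : Nonempty ((H ⊔ edge v w) ≃g (⊤ : SimpleGraph (Fin 3)))
  · obtain ⟨e, hev, hew⟩ := exists_iso_apply_zero_one h3 hne
    exact hasOPPDC_withVertex_compl_edge_three.map_iso
      (withVertexIso (complEdgeIso hvw e hev hew) (by simp [complEdgeIso, ← hev, ← hew]))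
  by_cases h5 : Nonempty ((H ⊔ edge v w) ≃g (⊤ : SimpleGraph (Fin 5)))
  · obtain ⟨e, hev, hew⟩ := exists_iso_apply_zero_one h5 hne
    exact hasOPPDC_withVertex_compl_edge_five.map_iso
      (withVertexIso (complEdgeIso hvw e hev hew) (by simp [complEdgeIso, ← hev, ← hew]))
  exact (hn W _ hW (hH.mono le_sup_left) h3 h5).withVertex_of_sup_edge hne hvw

lemma hasOPPDC_withVertex (hn : CoveredBelow n) (hW : Fintype.card W < n)
    (hH : H.Connected) {v w : W} (hne : v ≠ w)
    (hK3 : ¬ Nonempty (withVertex H {v, w} ≃g (⊤ : SimpleGraph (Fin 3)))) :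
    HasOPPDC (withVertex H {v, w}) := by
  by_cases hvw : H.Adj v w
  · exact hn.hasOPPDC_withVertex_of_adj hW hH hvw hK3
  · exact hn.hasOPPDC_withVertex_of_not_adj hW hH hne hvw

end CoveredBelow

namespace CoveredBelow

variable {V : Type} [Fintype V] {G : SimpleGraph V}

lemma hasOPPDC_of_ncard_neighborSet (hn : CoveredBelow (Fintype.card V))
    (hK3 : ¬ Nonempty (G ≃g (⊤ : SimpleGraph (Fin 3)))) {x : V}
    (hconn : (G.induce {x}ᶜ).Connected) (hx : (G.neighborSet x).ncard = 2) : HasOPPDC G := by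
  classical
  obtain ⟨v, w, hne, hvw⟩ := Set.ncard_eq_two.1 hx
  have hxv : G.Adj x v := hvw.ge (.inl rfl)
  have hxw : G.Adj x w := hvw.ge (.inr rfl)
  have hN : {y : ({x}ᶜ : Set V) | G.Adj x y} = {⟨v, hxv.ne'⟩, ⟨w, hxw.ne'⟩} := by
    ext y
    simpa [Subtype.ext_iff] using Set.ext_iff.1 hvw y
  let e := withVertexComplIso G x
  rw [hN] at e
  refine HasOPPDC.map_iso ?_ e
  refine hn.hasOPPDC_withVertex (Fintype.card_subtype_lt (x := x) (by simp)) hconn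
    (Subtype.coe_ne_coe.1 hne) ?_
  exact fun ⟨f⟩ => hK3 ⟨e.symm.trans f⟩

lemma hasOPPDC_of_subsingleton (hn : CoveredBelow (Fintype.card V))
    (hK3 : ¬ Nonempty (G ≃g (⊤ : SimpleGraph (Fin 3)))) {S : Set V} (hS : S.Nonempty)
    (hSub : S.Subsingleton) (hSc : (G.induce Sᶜ).Connected) (hcut : (edgeCut G S).ncard = 2) :
    HasOPPDC G := by
  obtain ⟨x, rfl⟩ := Set.exists_eq_singleton_iff_nonempty_subsingleton.2 ⟨hS, hSub⟩
  exact hn.hasOPPDC_of_ncard_neighborSet hK3 hSc (ncard_edgeCut_singleton G x ▸ hcut)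

lemma hasOPPDC_of_ncard_edgeCut_eq_one (hn : CoveredBelow (Fintype.card V)) {S : Set V}
    (hS : (G.induce S).Connected) (hSc : (G.induce Sᶜ).Connected)
    (hcut : (edgeCut G S).ncard = 1) : HasOPPDC G := by
  classical
  have hcard := Fintype.card_congr (Equiv.Set.sumCompl S)
  rw [Fintype.card_sum] at hcard
  have hS_pos := Fintype.card_pos_iff.2 hS.nonempty
  have hSc_pos := Fintype.card_pos_iff.2 hSc.nonempty
  exact hasOPPDC_of_induce (Finite.equivFinOfCardEq hcut).symm
    (hn.hasOpenCover_one (by lia) hS _) (hn.hasOpenCover_one (by lia) hSc _)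

lemma hasOPPDC_of_ncard_edgeCut_eq_two (hn : CoveredBelow (Fintype.card V))
    (hK3 : ¬ Nonempty (G ≃g (⊤ : SimpleGraph (Fin 3)))) {S : Set V}
    (hS : (G.induce S).Connected) (hSc : (G.induce Sᶜ).Connected)
    (hcut : (edgeCut G S).ncard = 2) : HasOPPDC G := by
  classical
  obtain hS1 | hS2 := S.subsingleton_or_nontrivial
  · exact hn.hasOPPDC_of_subsingleton hK3 (Set.nonempty_coe_sort.1 hS.nonempty) hS1 hSc hcut
  obtain hSc1 | hSc2 := Sᶜ.subsingleton_or_nontrivial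
  · exact hn.hasOPPDC_of_subsingleton hK3 (Set.nonempty_coe_sort.1 hSc.nonempty) hSc1
      (by rwa [compl_compl]) (by rwa [ncard_edgeCut_compl])
  have := hS2.coe_sort
  have := hSc2.coe_sort
  have hcard := Fintype.card_congr (Equiv.Set.sumCompl S)
  rw [Fintype.card_sum] at hcard
  have hS_card := Fintype.one_lt_card (α := S)
  have hSc_card := Fintype.one_lt_card (α := (Sᶜ : Set V))
  exact hasOPPDC_of_induce (Finite.equivFinOfCardEq hcut).symm
    (hn.hasOpenCover_two (by lia) hS _) (hn.hasOpenCover_two (by lia) hSc _)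

lemma hasOPPDC_of_ncard_edgeCut_le_two (hn : CoveredBelow (Fintype.card V))
    (hG : G.Connected) (hK3 : ¬ Nonempty (G ≃g (⊤ : SimpleGraph (Fin 3)))) {S : Set V}
    (hS : (G.induce S).Connected) (hSc : (G.induce Sᶜ).Connected)
    (hcut : (edgeCut G S).ncard ≤ 2) : HasOPPDC G := by
  have hcut_pos : 0 < (edgeCut G S).ncard :=
    (Set.ncard_pos (Set.toFinite _)).2 (preconnected_iff_forall_edgeCut_nonempty.1
      hG.preconnected S (Set.nonempty_coe_sort.1 hS.nonempty)
      (Set.nonempty_coe_sort.1 hSc.nonempty))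
  obtain hcut1 | hcut2 : (edgeCut G S).ncard = 1 ∨ (edgeCut G S).ncard = 2 := by lia
  · exact hn.hasOPPDC_of_ncard_edgeCut_eq_one hS hSc hcut1
  · exact hn.hasOPPDC_of_ncard_edgeCut_eq_two hK3 hS hSc hcut2

end CoveredBelow

end Minimality

/-- a minimal counterexample (w.r.t. number of vertices) to the
OPPDC conjecture is 3-edge-connected: deleting any set of at most 2 edges
leaves the graph connected. -/
theorem minimal_counterexample_three_edge_connected {V : Type} [Fintype V]
    (G : SimpleGraph V)
    (hconn : G.Connected)
    (hK3 : ¬ Nonempty (G ≃g (⊤ : SimpleGraph (Fin 3))))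
    (hK5 : ¬ Nonempty (G ≃g (⊤ : SimpleGraph (Fin 5))))
    (hno : ¬ HasOPPDC G)
    (hmin : ∀ (W : Type) [Fintype W] (H : SimpleGraph W),
      Fintype.card W < Fintype.card V → H.Connected →
      ¬ Nonempty (H ≃g (⊤ : SimpleGraph (Fin 3))) →
      ¬ Nonempty (H ≃g (⊤ : SimpleGraph (Fin 5))) →
      HasOPPDC H) :
    ∀ F : Set (Sym2 V), F ⊆ G.edgeSet → F.ncard ≤ 2 →
      (G.deleteEdges F).Connected := by
  intro F _ hcard
  have := hconn.nonempty
  have hbelow : CoveredBelow (Fintype.card V) := hmin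
  by_contra hF
  obtain ⟨T, hT, hTc, hcutT⟩ := exists_ncard_edgeCut_le hF
  obtain ⟨S, hS, hSc, hcutS⟩ := exists_connected_induce_connected_induce_compl hconn hT hTc
  exact hno (hbelow.hasOPPDC_of_ncard_edgeCut_le_two hconn hK3 hS hSc (by lia))
end
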